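/- Let p be a prime, F a field of characteristic p, n a positive integer, and r, s integers with 1 ≤ r ≤ s < p^{n+1}. Write r = r_0·p^n + r_1 and s = s_0·p^n + s_1 where r_0, s_0 ≥ 0 and 1 ≤ r_1, s_1 with r_1 + s_1 ≤ p^n. Let μ-multiset Λ(r_1,s_1) denote the multiset of parts such that J_{r_1} ⊗ J_{s_1} is similar over F to the block-diagonal matrix with m_ν blocks J_ν for each ν in Λ(r_1,s_1), written with distinct parts ν_1 > ⋯ > ν_ℓ > 0 and multiplicities n_1,…,n_ℓ ≥ 1. Set (c, d_1, d_2) = (0, r_0, r_0) if r_0 + s_0 < p, and (c, d_1, d_2) = (r + s − p^{n+1}, p − s_0 − 1, p − s_0) if r_0 + s_0 ≥ p. Then J_r ⊗ J_s is similar over F to the block-diagonal matrix consisting of: c blocks J_{p^{n+1}}; |r_1 − s_1| blocks J_{(s_0−r_0+2i)p^n} for each 1 ≤ i ≤ d_1; max(0, r_1 − s_1) blocks J_{(s_0−r_0)p^n}; (p^n − r_1 − s_1) blocks J_{(s_0−r_0+2i−1)p^n} for each 1 ≤ i ≤ d_2; and, for each 1 ≤ j ≤ ℓ, n_j blocks J_{(s_0−r_0+2i)p^n+ν_j}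 for each 0 ≤ i ≤ d_1 and n_j blocks J_{(s_0−r_0+2i)p^n−ν_j} for each 1 ≤ i ≤ d_1. -/

import Mathlib

open Kronecker

/-- The `m × m` Jordan block with eigenvalue `1`: ones on the main diagonal and the
superdiagonal, zeros elsewhere. -/
def jordanBlock (F : Type*) [Zero F] [One F] (m : ℕ) : Matrix (Fin m) (Fin m) F :=
  Matrix.of fun i j => if (j : ℕ) = (i : ℕ) ∨ (j : ℕ) = (i : ℕ) + 1 then 1 else 0

/-- The block-diagonal matrix whose diagonal blocks are the Jordan blocks `J_{d i}`, `i : ι`. -/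
def jordanBlockDiag (F : Type*) [Field F] {ι : Type} [DecidableEq ι] (d : ι → ℕ) :
    Matrix ((i : ι) × Fin (d i)) ((i : ι) × Fin (d i)) F :=
  Matrix.blockDiagonal' fun i => jordanBlock F (d i)

/-- Similarity of square matrices, possibly indexed by different (finite) types:
both matrices represent the same linear endomorphism up to a linear change of basis. -/
def MatSimilar (F : Type*) [Field F] {n m : Type*} [Fintype n] [Fintype m]
    (A : Matrix n n F) (B : Matrix m m F) : Prop :=
  ∃ e : (n → F) ≃ₗ[F] (m → F), ∀ v, e (A.mulVec v) = B.mulVec (e v)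

/-!
Up to similarity a unipotent matrix `A` is determined by the numbers `dim ker (A - 1) ^ k`; for
Jordan blocks of sizes `β` they are the sums `∑ min β k`. For `A = J_r ⊗ J_s` the matrix `A - 1` is
similar to `N ⊗ 1 + 1 ⊗ N` with `N` nilpotent, and the dimension of the kernel of its `k`-th power
can be read off from the degrees of the syzygies of the binary forms `x ^ r`, `(x + y) ^ k`,
`y ^ s`.

Let `q` be a power of the characteristic `p`. If `a + b + c = 2 d` with `d < p` and `a, b, c ≤ d`,
the Mason–Stothers argument shows that `x ^ a`, `(x + y) ^ b`, `y ^ c` have no syzygy of degree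
less than `d`, so their syzygies have a basis of two elements of degree `d`. Replacing the variables
by their `q`-th powers turns this basis into a matrix that identifies, up to a shift of degree, the
syzygies for exponents `i, j, l ≤ q` with those for `a q + i`, `b q ± j`, `c q + l`. This reduces
`J_r ⊗ J_s` to `J_{r₁} ⊗ J_{s₁}` for the exponents `k` below the largest multiple of `q` that can
be reached with `d < p`. The remaining blocks are found without syzygies: the kernel dimensions are
concave in `k`, their first increment is at most `r`, and `(x + y) ^ (p q - 1)` has rank at least
`r + s - p q`.
-/

open Polynomial

namespace JordanTensor

section PolynomialsOfBoundedDegree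

variable {F : Type*} [Field F] {f g : F[X]} {z w : ℤ} {n : ℕ}

/-- The polynomials of degree less than `z`. The bound is an integer so that it can be shifted
without truncation; for `z ≤ 0` only the zero polynomial is left. -/
noncomputable def degLT (F : Type*) [Field F] (z : ℤ) : Submodule F F[X] :=
  degreeLT F z.toNat

theorem mem_degLT_iff_coeff : f ∈ degLT F z ↔ ∀ n : ℕ, z ≤ n → f.coeff n = 0 := by
  simp only [degLT, mem_degreeLT, degree_lt_iff_coeff_zero, Int.toNat_le]

theorem mem_degLT_iff_natDegree : f ∈ degLT F z ↔ f = 0 ∨ (f.natDegree : ℤ) < z := by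
  rw [mem_degLT_iff_coeff]
  constructor
  · intro hf
    by_contra! hne
    exact hne.1 (leadingCoeff_eq_zero.1 (hf f.natDegree hne.2))
  · rintro (rfl | hf) n hn
    · exact coeff_zero n
    · exact coeff_eq_zero_of_natDegree_lt (by omega)

instance finite_degLT (z : ℤ) : Module.Finite F (degLT F z) :=
  Module.Finite.equiv (degreeLTEquiv F z.toNat).symm

theorem finrank_degLT (z : ℤ) : Module.finrank F (degLT F z) = z.toNat := by
  exact (degreeLTEquiv F z.toNat).finrank_eq.trans (Module.finrank_fin_fun F)

theorem degLT_mono (hzw : z ≤ w) : degLT F z ≤ degLT F w :=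
  degreeLT_mono (Int.toNat_le_toNat hzw)

theorem eq_zero_of_mem_degLT (hf : f ∈ degLT F z) (hz : z ≤ 0) : f = 0 := by
  rcases mem_degLT_iff_natDegree.1 hf with hf | hf
  · exact hf
  · omega

theorem mul_mem_degLT {u : ℤ} (hf : f ∈ degLT F z) (hg : g ∈ degLT F w) (hu : z + w - 1 ≤ u) :
    f * g ∈ degLT F u := by
  rw [mem_degLT_iff_natDegree] at *
  rcases hf with rfl | hf
  · simp
  rcases hg with rfl | hg
  · simp
  have := natDegree_mul_le (p := f) (q := g)
  right
  omega

theorem mul_mem_degLT_iff_of_monic (hg : g.Monic) :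
    g * f ∈ degLT F z ↔ f ∈ degLT F (z - g.natDegree) := by
  simp only [mem_degLT_iff_natDegree, mul_eq_zero, hg.ne_zero, false_or]
  refine or_congr_right' fun hf => ?_
  rw [natDegree_mul hg.ne_zero hf]
  omega

theorem eq_zero_of_dvd_of_mem_degLT (hg : g.Monic) (hgf : g ∣ f) (hf : f ∈ degLT F z)
    (hz : z ≤ g.natDegree) : f = 0 := by
  obtain ⟨t, rfl⟩ := hgf
  rw [eq_zero_of_mem_degLT ((mul_mem_degLT_iff_of_monic hg).1 hf) (by omega), mul_zero]

theorem derivative_mem_degLT (hf : f ∈ degLT F z) : derivative f ∈ degLT F (z - 1) := by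
  rw [mem_degLT_iff_coeff] at *
  intro n hn
  rw [coeff_derivative, hf (n + 1) (by push_cast; omega), zero_mul]

theorem expand_mem_degLT {q : ℕ} (hf : f ∈ degLT F z) (hw : (z - 1) * q + 1 ≤ w) :
    expand F q f ∈ degLT F w := by
  rw [mem_degLT_iff_natDegree] at *
  rcases hf with rfl | hf
  · simp
  right
  rw [natDegree_expand]
  push_cast
  nlinarith [show (f.natDegree : ℤ) ≤ z - 1 by omega, Int.natCast_nonneg q]

theorem mem_degLT_sub_one (hf : f ∈ degLT F (n + 1)) (h0 : f.coeff n = 0) : f ∈ degLT F n := by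
  rw [mem_degLT_iff_coeff] at *
  intro m hm
  rcases hm.eq_or_lt with hm | hm
  · rwa [← Nat.cast_injective hm]
  · exact hf m (by omega)

/-- The multiples of `g` of degree less than `z`. -/
noncomputable def multiplesLT (g : F[X]) (z : ℤ) : Submodule F F[X] :=
  (Ideal.span {g}).restrictScalars F ⊓ degLT F z

theorem mem_multiplesLT : f ∈ multiplesLT g z ↔ g ∣ f ∧ f ∈ degLT F z := by
  simp [multiplesLT, Ideal.mem_span_singleton]

instance finite_multiplesLT (g : F[X]) (z : ℤ) : Module.Finite F (multiplesLT g z) :=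
  Submodule.finiteDimensional_of_le inf_le_right

theorem multiplesLT_eq_map (hg : g.Monic) :
    multiplesLT g z = (degLT F (z - g.natDegree)).map (LinearMap.mulLeft F g) := by
  ext f
  simp only [mem_multiplesLT, Submodule.mem_map, LinearMap.mulLeft_apply]
  constructor
  · rintro ⟨⟨t, rfl⟩, hf⟩
    exact ⟨t, (mul_mem_degLT_iff_of_monic hg).1 hf, rfl⟩
  · rintro ⟨t, ht, rfl⟩
    exact ⟨dvd_mul_right g t, (mul_mem_degLT_iff_of_monic hg).2 ht⟩

theorem finrank_multiplesLT (hg : g.Monic) :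
    Module.finrank F (multiplesLT g z) = (z - g.natDegree).toNat := by
  have hinj : Function.Injective (LinearMap.mulLeft F g) := mul_right_injective₀ hg.ne_zero
  rw [multiplesLT_eq_map hg, ← (Submodule.equivMapOfInjective _ hinj _).finrank_eq, finrank_degLT]

end PolynomialsOfBoundedDegree

section PowersOfXAndOneAddX

variable {F : Type*} [Field F] {f g : F[X]} {a b q : ℕ}

theorem monic_one_add_X_pow (n : ℕ) : ((1 + X : F[X]) ^ n).Monic := by
  rw [add_comm, ← C_1]
  exact (monic_X_add_C _).pow n

theorem natDegree_one_add_X_pow (n : ℕ) : ((1 + X : F[X]) ^ n).natDegree = n := by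
  rw [add_comm, ← C_1, natDegree_pow, natDegree_X_add_C, mul_one]

theorem monic_X_pow_mul_one_add_X_pow (a b : ℕ) : ((X : F[X]) ^ a * (1 + X) ^ b).Monic :=
  (monic_X_pow a).mul (monic_one_add_X_pow b)

theorem natDegree_X_pow_mul_one_add_X_pow (a b : ℕ) :
    ((X : F[X]) ^ a * (1 + X) ^ b).natDegree = a + b := by
  rw [(monic_X_pow a).natDegree_mul (monic_one_add_X_pow b), natDegree_X_pow,
    natDegree_one_add_X_pow]

theorem isCoprime_X_one_add_X : IsCoprime (X : F[X]) (1 + X) :=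
  ⟨-1, 1, by ring⟩

theorem X_pow_mul_one_add_X_pow_dvd (hX : X ^ a ∣ f) (hX1 : (1 + X) ^ b ∣ f) :
    X ^ a * (1 + X) ^ b ∣ f :=
  isCoprime_X_one_add_X.pow.mul_dvd hX hX1

theorem pow_dvd_mul_of_le {x : F[X]} {n : ℕ} (hf : x ^ a ∣ f) (hg : x ^ b ∣ g) (hn : n ≤ a + b) :
    x ^ n ∣ f * g :=
  (pow_dvd_pow x hn).trans (by rw [pow_add]; exact mul_dvd_mul hf hg)

theorem X_pow_dvd_expand (hf : X ^ a ∣ f) : X ^ (a * q) ∣ expand F q f := by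
  simpa [← pow_mul, mul_comm q] using map_dvd (expand F q) hf

theorem one_add_X_pow_dvd_expand (hq : (1 + X : F[X]) ^ q = 1 + X ^ q) (hf : (1 + X) ^ a ∣ f) :
    (1 + X) ^ (a * q) ∣ expand F q f := by
  simpa [← hq, ← pow_mul, mul_comm q] using map_dvd (expand F q) hf

end PowersOfXAndOneAddX

section Syzygies

variable {F : Type*} [Field F] {f g h : F[X]} {a b c d r k s : ℕ} {m : ℤ}

/-- The degree `m - 1` part of the syzygies of `(x ^ r, (x + y) ^ k, y ^ s)`, dehomogenised at
`y = 1`: the pairs `(f, h)` of polynomials of degree less than `m` such that `f` vanishes to order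
`r` at `0`, `h` vanishes to order `k` at `-1`, and `f + h` vanishes to order `s` at `∞`. -/
noncomputable def syz (F : Type*) [Field F] (r k s : ℕ) (m : ℤ) : Submodule F (F[X] × F[X]) :=
  (multiplesLT (X ^ r) m).prod (multiplesLT ((1 + X) ^ k) m) ⊓
    (degLT F (m - s)).comap (LinearMap.fst F F[X] F[X] + LinearMap.snd F F[X] F[X])

theorem mem_syz : (f, h) ∈ syz F r k s m ↔
    X ^ r ∣ f ∧ (1 + X) ^ k ∣ h ∧ f ∈ degLT F m ∧ h ∈ degLT F m ∧ f + h ∈ degLT F (m - s) := by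
  simp only [syz, Submodule.mem_inf, Submodule.mem_prod, mem_multiplesLT, Submodule.mem_comap,
    LinearMap.add_apply, LinearMap.fst_apply, LinearMap.snd_apply]
  tauto

instance finite_syz (r k s : ℕ) (m : ℤ) : Module.Finite F (syz F r k s m) := by
  have hfg := (Module.Finite.iff_fg.1 (finite_multiplesLT (X ^ r : F[X]) m)).prod
    (Module.Finite.iff_fg.1 (finite_multiplesLT ((1 + X : F[X]) ^ k) m))
  have := Module.Finite.iff_fg.2 hfg
  exact Submodule.finiteDimensional_of_le inf_le_left

/-- The relation module `{(a, c) | a + c ∈ B}` of three subspaces `A`, `B`, `C` is the kernel of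
`A × C × B → A + B + C`, `(a, c, b) ↦ a + c - b`. -/
theorem finrank_prod_inf_comap_add {V : Type*} [AddCommGroup V] [Module F V]
    (A B C : Submodule F V) [FiniteDimensional F A] [FiniteDimensional F B]
    [FiniteDimensional F C] :
    Module.finrank F ↥(A.prod C ⊓ B.comap (LinearMap.fst F V V + LinearMap.snd F V V)) +
      Module.finrank F ↥(A ⊔ B ⊔ C) =
      Module.finrank F A + Module.finrank F B + Module.finrank F C := by
  let φ : ((A × C) × B) →ₗ[F] V := (A.subtype.coprod C.subtype).coprod (-B.subtype)
  have hφ : ∀ x, φ x = x.1.1 + x.1.2 - x.2 := fun x => by simp [φ, sub_eq_add_neg]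
  have hrange : LinearMap.range φ = A ⊔ B ⊔ C := by
    simp only [φ, LinearMap.range_coprod, LinearMap.range_neg, Submodule.range_subtype]
    exact sup_right_comm A C B
  let e : ↥(A.prod C ⊓ B.comap (LinearMap.fst F V V + LinearMap.snd F V V)) ≃ₗ[F]
      LinearMap.ker φ :=
    { toFun := fun x => ⟨((⟨x.1.1, x.2.1.1⟩, ⟨x.1.2, x.2.1.2⟩), ⟨x.1.1 + x.1.2, x.2.2⟩), by
        simp [hφ]⟩
      map_add' := fun x y => by ext <;> simp [add_add_add_comm]
      map_smul' := fun t x => by ext <;> simp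
      invFun := fun y => ⟨(y.1.1.1, y.1.1.2), ⟨y.1.1.1.2, y.1.1.2.2⟩, by
        have hy := y.2
        rw [LinearMap.mem_ker, hφ, sub_eq_zero] at hy
        simp [hy]⟩
      left_inv := fun x => rfl
      right_inv := fun y => by
        have hy := y.2
        rw [LinearMap.mem_ker, hφ, sub_eq_zero] at hy
        ext <;> simp [hy] }
  rw [e.finrank_eq, ← hrange, add_comm, LinearMap.finrank_range_add_finrank_ker,
    Module.finrank_prod, Module.finrank_prod]
  omega

theorem finrank_syz_add_finrank_sup (r k s : ℕ) (m : ℤ) :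
    Module.finrank F (syz F r k s m) + Module.finrank F
      ↥(multiplesLT (X ^ r : F[X]) m ⊔ degLT F (m - s) ⊔ multiplesLT ((1 + X : F[X]) ^ k) m) =
      (m - r).toNat + (m - s).toNat + (m - k).toNat := by
  rw [syz, finrank_prod_inf_comap_add, finrank_degLT, finrank_multiplesLT (monic_X_pow r),
    finrank_multiplesLT (monic_one_add_X_pow k), natDegree_X_pow, natDegree_one_add_X_pow]

theorem exists_mem_syz_ne_zero (hm : (s : ℤ) < (m - r) + (m - k)) :
    ∃ f h : F[X], (f, h) ∈ syz F r k s m ∧ (f, h) ≠ 0 := by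
  have hle : multiplesLT (X ^ r : F[X]) m ⊔ degLT F (m - s) ⊔ multiplesLT ((1 + X : F[X]) ^ k) m ≤
      degLT F m :=
    sup_le (sup_le inf_le_right (degLT_mono (by omega))) inf_le_right
  have hsup := Submodule.finrank_mono hle
  rw [finrank_degLT] at hsup
  have hpos : Module.finrank F (syz F r k s m) ≠ 0 := by
    have := finrank_syz_add_finrank_sup (F := F) r k s m
    omega
  obtain ⟨⟨f, h⟩, hfh, hne⟩ := Submodule.exists_mem_ne_zero_of_ne_bot
    (p := syz F r k s m) fun h0 => hpos (by rw [h0, finrank_bot])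
  exact ⟨f, h, hfh, hne⟩

theorem mem_syz_succ_left (hx : (f, h) ∈ syz F r k s m) (hf : X ^ (r + 1) ∣ f) :
    (f, h) ∈ syz F (r + 1) k s m :=
  mem_syz.2 ⟨hf, (mem_syz.1 hx).2⟩

theorem mem_syz_succ_right {e : ℕ} (hx : (f, h) ∈ syz F r k s m) (hm : m = s + e + 1)
    (he : (f + h).coeff e = 0) : (f, h) ∈ syz F r k (s + 1) m := by
  obtain ⟨hf, hh, df, dh, dfh⟩ := mem_syz.1 hx
  refine mem_syz.2 ⟨hf, hh, df, dh, ?_⟩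
  rw [show m - ((s + 1 : ℕ) : ℤ) = e by push_cast; omega]
  exact mem_degLT_sub_one (by rwa [show m - (s : ℤ) = e + 1 by omega] at dfh) he

theorem exists_eq_C_of_derivative_eq_zero (p : ℕ) [CharP F p] {u : F[X]}
    (hu : u.natDegree < p) (hder : derivative u = 0) : ∃ t, u = C t := by
  refine ⟨u.coeff 0, ext fun n => ?_⟩
  rcases n with _ | n
  · simp
  rw [coeff_C_succ]
  by_contra hn
  have hcoeff : u.coeff (n + 1) * ((n + 1 : ℕ) : F) = 0 := by
    simpa [coeff_derivative] using congrArg (coeff · n) hder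
  have hdvd : p ∣ n + 1 :=
    (CharP.cast_eq_zero_iff F p _).1 ((mul_eq_zero.1 hcoeff).resolve_left hn)
  exact absurd (Nat.le_of_dvd n.succ_pos hdvd) (by have := le_natDegree_of_ne_zero hn; omega)

theorem exists_eq_C_mul_of_wronskian_eq_zero (p : ℕ) [CharP F p] (hf0 : f ≠ 0) (hh0 : h ≠ 0)
    (hf : f.natDegree < p) (hh : h.natDegree < p) (hW : wronskian f h = 0) :
    ∃ t, t ≠ 0 ∧ h = C t * f := by
  classical
  obtain ⟨f₁, h₁, hff, hhh, hunit⟩ := extract_gcd f h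
  have hcop : IsCoprime f₁ h₁ := (gcd_isUnit_iff _ _).1 hunit
  generalize gcd f h = g at hff hhh
  subst hff hhh
  obtain ⟨hg0, hf₁⟩ := mul_ne_zero_iff.1 hf0
  obtain ⟨-, hh₁⟩ := mul_ne_zero_iff.1 hh0
  have hW₁ : wronskian f₁ h₁ = 0 := by
    have hscale : wronskian (g * f₁) (g * h₁) = g ^ 2 * wronskian f₁ h₁ := by
      simp only [wronskian, derivative_mul]
      ring
    exact (mul_eq_zero.1 (hscale ▸ hW)).resolve_left (pow_ne_zero 2 hg0)
  obtain ⟨hdf, hdh⟩ := hcop.wronskian_eq_zero_iff.1 hW₁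
  rw [natDegree_mul hg0 hf₁] at hf
  rw [natDegree_mul hg0 hh₁] at hh
  obtain ⟨t, rfl⟩ := exists_eq_C_of_derivative_eq_zero p (by omega) hdf
  obtain ⟨u, rfl⟩ := exists_eq_C_of_derivative_eq_zero p (by omega) hdh
  rw [C_ne_zero] at hf₁ hh₁
  refine ⟨u / t, div_ne_zero hh₁ hf₁, ?_⟩
  rw [mul_left_comm, ← C_mul, div_mul_cancel₀ _ hf₁]

/-- The Wronskian is divisible by `X ^ (a - 1) (1 + X) ^ (b - 1)`, and rewriting it in terms of
`f + h`, which has small degree, shows that its own degree is less than `a + b - 2`. -/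
theorem wronskian_eq_zero_of_mem_syz (ha : 0 < a) (hb : 0 < b) (hm : 2 * m ≤ a + b + c)
    (hx : (f, h) ∈ syz F a b c m) : wronskian f h = 0 := by
  obtain ⟨hf, hh, df, -, dfh⟩ := mem_syz.1 hx
  have hdeg : wronskian f h ∈ degLT F (a + b - 2) := by
    have hW : wronskian f h = f * derivative (f + h) - derivative f * (f + h) := by
      simp only [wronskian, derivative_add]
      ring
    rw [hW]
    exact sub_mem (mul_mem_degLT df (derivative_mem_degLT dfh) (by omega))
      (mul_mem_degLT (derivative_mem_degLT df) dfh (by omega))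
  have hX : X ^ (a - 1) ∣ wronskian f h :=
    dvd_sub (((pow_dvd_pow X (Nat.sub_le a 1)).trans hf).mul_right _)
      ((pow_sub_one_dvd_derivative_of_pow_dvd hf).mul_right _)
  have hX1 : (1 + X) ^ (b - 1) ∣ wronskian f h :=
    dvd_sub ((pow_sub_one_dvd_derivative_of_pow_dvd hh).mul_left _)
      (((pow_dvd_pow _ (Nat.sub_le b 1)).trans hh).mul_left _)
  refine eq_zero_of_dvd_of_mem_degLT (monic_X_pow_mul_one_add_X_pow (a - 1) (b - 1))
    (X_pow_mul_one_add_X_pow_dvd hX hX1) hdeg ?_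
  rw [natDegree_X_pow_mul_one_add_X_pow]
  omega

/-- The Mason–Stothers argument. -/
theorem eq_zero_of_mem_syz (p : ℕ) [CharP F p] (hsum : a + b + c = 2 * d) (hd : d ≤ p)
    (ha : a ≤ b + c) (hb : b ≤ a + c) (hc : c ≤ a + b) (hx : (f, h) ∈ syz F a b c d) :
    (f, h) = 0 := by
  obtain ⟨hf, hh, df, dh, dfh⟩ := mem_syz.1 hx
  have hf_zero {u : F[X]} (hu : X ^ a ∣ u) {z : ℤ} (du : u ∈ degLT F z) (hz : z ≤ a) : u = 0 :=
    eq_zero_of_dvd_of_mem_degLT (monic_X_pow a) hu du (by rwa [natDegree_X_pow])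
  have hh_zero {u : F[X]} (hu : (1 + X) ^ b ∣ u) {z : ℤ} (du : u ∈ degLT F z) (hz : z ≤ b) :
      u = 0 :=
    eq_zero_of_dvd_of_mem_degLT (monic_one_add_X_pow b) hu du (by rwa [natDegree_one_add_X_pow])
  have hiff : f = 0 ↔ h = 0 := by
    constructor <;> rintro rfl
    · exact hh_zero hh (by rwa [zero_add] at dfh) (by omega)
    · exact hf_zero hf (by rwa [add_zero] at dfh) (by omega)
  by_contra hne
  have hf0 : f ≠ 0 := fun h0 => hne (by rw [h0, hiff.1 h0]; rfl)
  have hh0 : h ≠ 0 := fun h0 => hf0 (hiff.2 h0)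
  have ha0 : 0 < a := by
    by_contra! h0
    exact hh0 (hh_zero hh dh (by omega))
  have hb0 : 0 < b := by
    by_contra! h0
    exact hf0 (hf_zero hf df (by omega))
  have df' := (mem_degLT_iff_natDegree.1 df).resolve_left hf0
  have dh' := (mem_degLT_iff_natDegree.1 dh).resolve_left hh0
  obtain ⟨t, ht, rfl⟩ := exists_eq_C_mul_of_wronskian_eq_zero p hf0 hh0 (by omega) (by omega)
    (wronskian_eq_zero_of_mem_syz ha0 hb0 (by omega) hx)
  have hX1 : (1 + X) ^ b ∣ f := (IsUnit.dvd_mul_left (isUnit_C.2 (IsUnit.mk0 t ht))).1 hh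
  refine hf0 (eq_zero_of_dvd_of_mem_degLT (monic_X_pow_mul_one_add_X_pow a b)
    (X_pow_mul_one_add_X_pow_dvd hf hX1) df ?_)
  rw [natDegree_X_pow_mul_one_add_X_pow]
  omega

end Syzygies

section FrobeniusTransfer

variable {F : Type*} [Field F] {A B C E f h : F[X]}

/-- The linear map `(f, h) ↦ (A f + B h, C f + E h)`. -/
noncomputable def mulMat (A B C E : F[X]) : (F[X] × F[X]) →ₗ[F] (F[X] × F[X]) :=
  ((LinearMap.mulLeft F A).coprod (LinearMap.mulLeft F B)).prod
    ((LinearMap.mulLeft F C).coprod (LinearMap.mulLeft F E))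

theorem mulMat_apply (A B C E f h : F[X]) :
    mulMat A B C E (f, h) = (A * f + B * h, C * f + E * h) := rfl

theorem mulMat_injective (hdet : A * E - B * C ≠ 0) : Function.Injective (mulMat A B C E) := by
  rw [injective_iff_map_eq_zero]
  rintro ⟨f, h⟩ h0
  rw [mulMat_apply, Prod.mk_eq_zero] at h0
  have hf : (A * E - B * C) * f = 0 := by linear_combination E * h0.1 - B * h0.2
  have hh : (A * E - B * C) * h = 0 := by linear_combination A * h0.2 - C * h0.1
  rw [(mul_eq_zero.1 hf).resolve_left hdet, (mul_eq_zero.1 hh).resolve_left hdet, Prod.mk_zero_zero]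

theorem finrank_le_of_mulMat {L L' : Submodule F (F[X] × F[X])} [FiniteDimensional F L']
    (hdet : A * E - B * C ≠ 0) (g : F[X])
    (hL : ∀ f h, (f, h) ∈ L → ∃ x ∈ L', g • x = (A * f + B * h, C * f + E * h)) :
    Module.finrank F L ≤ Module.finrank F L' := by
  rw [(Submodule.equivMapOfInjective _ (mulMat_injective hdet) L).finrank_eq]
  refine (Submodule.finrank_mono ?_).trans
    (Submodule.finrank_map_le (DistribSMul.toLinearMap F (F[X] × F[X]) g) L')
  rintro _ ⟨⟨f, h⟩, hfh, rfl⟩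
  exact hL f h hfh

theorem exists_mem_syz_smul_eq {a b r k s : ℕ} {m : ℤ} (hf : X ^ (a + r) ∣ f) (hh : X ^ a ∣ h)
    (hf1 : (1 + X) ^ b ∣ f) (hh1 : (1 + X) ^ (b + k) ∣ h) (df : f ∈ degLT F (m + a + b))
    (dh : h ∈ degLT F (m + a + b)) (dfh : f + h ∈ degLT F (m + a + b - s)) :
    ∃ x ∈ syz F r k s m, (X ^ a * (1 + X) ^ b : F[X]) • x = (f, h) := by
  have hmonic := monic_X_pow_mul_one_add_X_pow (F := F) a b
  obtain ⟨f', rfl⟩ := X_pow_mul_one_add_X_pow_dvd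
    ((pow_dvd_pow X (Nat.le_add_right a r)).trans hf) hf1
  obtain ⟨h', rfl⟩ := X_pow_mul_one_add_X_pow_dvd
    hh ((pow_dvd_pow _ (Nat.le_add_right b k)).trans hh1)
  rw [← mul_add] at dfh
  rw [mul_mem_degLT_iff_of_monic hmonic, natDegree_X_pow_mul_one_add_X_pow] at df dh dfh
  rw [pow_add, mul_assoc, mul_dvd_mul_iff_left (pow_ne_zero a X_ne_zero)] at hf
  rw [pow_add, mul_right_comm, mul_comm, mul_dvd_mul_iff_right
    (monic_one_add_X_pow b).ne_zero] at hh1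
  push_cast at df dh dfh
  refine ⟨(f', h'), mem_syz.2 ⟨isCoprime_X_one_add_X.pow.dvd_of_dvd_mul_left hf,
    isCoprime_X_one_add_X.symm.pow.dvd_of_dvd_mul_left hh1, ?_, ?_, ?_⟩, rfl⟩
  · exact degLT_mono (by omega) df
  · exact degLT_mono (by omega) dh
  · exact degLT_mono (by omega) dfh

/-- The columns `(A, C)` and `(B, E)` are independent syzygies of degree `d` for the exponents
`(a, b, c)`; the second column vanishes to order `a + u` at `0`, the difference of the columns
vanishes to order `c + u` at `∞`, and the vanishing at `-1` of the first column is recorded by the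
exponents `eA` and `eC`. Substituting `X ^ q` for `X` multiplies all parameters by `q`. -/
structure IsSyzMatrix (u a b c d eA eC : ℕ) (A B C E : F[X]) : Prop where
  sum_eq : a + b + c = 2 * d
  X_dvd_A : X ^ a ∣ A
  X_dvd_B : X ^ (a + u) ∣ B
  X1_dvd_E : (1 + X) ^ b ∣ E
  X1_dvd_A : (1 + X) ^ eA ∣ A
  X1_dvd_C : (1 + X) ^ eC ∣ C
  deg_A : A ∈ degLT F (d + 1)
  deg_B : B ∈ degLT F (d + 1)
  deg_C : C ∈ degLT F (d + 1)
  deg_E : E ∈ degLT F (d + 1)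
  deg_AC : A + C ∈ degLT F (d + 1 - c)
  deg_BE : B + E ∈ degLT F (d + 1 - c)
  deg_sub : B + E - (A + C) ∈ degLT F (d + 1 - c - u)
  det_ne_zero : A * E - B * C ≠ 0

namespace IsSyzMatrix

variable {q u a b c d eA eC : ℕ}

theorem expand (hM : IsSyzMatrix u a b c d eA eC A B C E) (hq0 : 0 < q)
    (hq : (1 + X : F[X]) ^ q = 1 + X ^ q) :
    IsSyzMatrix (u * q) (a * q) (b * q) (c * q) (d * q) (eA * q) (eC * q)
      (expand F q A) (expand F q B) (expand F q C) (expand F q E) where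
  sum_eq := by linear_combination q * hM.sum_eq
  X_dvd_A := X_pow_dvd_expand hM.X_dvd_A
  X_dvd_B := by rw [← add_mul]; exact X_pow_dvd_expand hM.X_dvd_B
  X1_dvd_E := one_add_X_pow_dvd_expand hq hM.X1_dvd_E
  X1_dvd_A := one_add_X_pow_dvd_expand hq hM.X1_dvd_A
  X1_dvd_C := one_add_X_pow_dvd_expand hq hM.X1_dvd_C
  deg_A := expand_mem_degLT hM.deg_A (by push_cast; linarith)
  deg_B := expand_mem_degLT hM.deg_B (by push_cast; linarith)
  deg_C := expand_mem_degLT hM.deg_C (by push_cast; linarith)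
  deg_E := expand_mem_degLT hM.deg_E (by push_cast; linarith)
  deg_AC := by
    rw [← map_add]
    exact expand_mem_degLT hM.deg_AC (by push_cast; linarith)
  deg_BE := by
    rw [← map_add]
    exact expand_mem_degLT hM.deg_BE (by push_cast; linarith)
  deg_sub := by
    rw [← map_add, ← map_add, ← map_sub]
    exact expand_mem_degLT hM.deg_sub (by push_cast; linarith)
  det_ne_zero := by
    rw [← map_mul, ← map_mul, ← map_sub]
    exact (map_ne_zero_iff _ (expand_injective hq0)).2 hM.det_ne_zero

variable {i j k l w : ℕ} {m : ℤ}

theorem exists_smul_eq_mulMat (hM : IsSyzMatrix u a b c d eA eC A B C E) (hi : i ≤ u)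
    (hl : l ≤ u) (hwA : w ≤ eA) (hwj : w ≤ j) (hkC : w + k ≤ eC) (hkj : w + k ≤ b + j)
    (hfh : (f, h) ∈ syz F i j l m) :
    ∃ x ∈ syz F (a + i) k (c + l) (m + d - w),
      ((1 + X) ^ w : F[X]) • x = (A * f + B * h, C * f + E * h) := by
  obtain ⟨hf, hh, df, dh, dfh⟩ := mem_syz.1 hfh
  have deg_first : A * f + B * h ∈ degLT F (m + d) :=
    add_mem (mul_mem_degLT hM.deg_A df (by omega)) (mul_mem_degLT hM.deg_B dh (by omega))
  have deg_second : C * f + E * h ∈ degLT F (m + d) :=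
    add_mem (mul_mem_degLT hM.deg_C df (by omega)) (mul_mem_degLT hM.deg_E dh (by omega))
  have deg_add : (A * f + B * h) + (C * f + E * h) ∈ degLT F (m + d - (c + l : ℕ)) := by
    rw [show (A * f + B * h) + (C * f + E * h) =
      (A + C) * (f + h) + (B + E - (A + C)) * h by ring]
    exact add_mem (mul_mem_degLT hM.deg_AC dfh (by push_cast; omega))
      (mul_mem_degLT hM.deg_sub dh (by push_cast; omega))
  rw [show m + (d : ℤ) = m + d - w + (0 : ℕ) + w by push_cast; ring]
    at deg_first deg_second deg_add
  have hx := exists_mem_syz_smul_eq (a := 0) (b := w) (r := a + i) (k := k)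
    (dvd_add (pow_dvd_mul_of_le hM.X_dvd_A hf (by omega))
      (pow_dvd_mul_of_le hM.X_dvd_B (b := 0) (by simp) (by omega)))
    (by simp)
    (dvd_add (((pow_dvd_pow _ hwA).trans hM.X1_dvd_A).mul_right f)
      (((pow_dvd_pow _ hwj).trans hh).mul_left B))
    (dvd_add (((pow_dvd_pow _ hkC).trans hM.X1_dvd_C).mul_right f)
      (pow_dvd_mul_of_le hM.X1_dvd_E hh hkj))
    deg_first deg_second deg_add
  rwa [pow_zero, one_mul] at hx

theorem exists_smul_eq_mulMat_adjugate (hM : IsSyzMatrix u a b c d eA eC A B C E) (hi : i ≤ u)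
    (hl : l ≤ u) (hbk : b ≤ w + k) (hjA : b + j ≤ eA + w + k) (hjC : b + j ≤ eC + w)
    (hfh : (f, h) ∈ syz F (a + i) k (c + l) (m + d - w)) :
    ∃ x ∈ syz F i j l m, (X ^ a * (1 + X) ^ b : F[X]) • x =
      ((1 + X) ^ w * E * f + -((1 + X) ^ w * B) * h,
        -((1 + X) ^ w * C) * f + (1 + X) ^ w * A * h) := by
  have hsum := hM.sum_eq
  obtain ⟨hf, hh, df, dh, dfh⟩ := mem_syz.1 hfh
  push_cast at dfh
  have dw : (1 + X : F[X]) ^ w ∈ degLT F (w + 1) :=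
    mem_degLT_iff_natDegree.2 (Or.inr (by rw [natDegree_one_add_X_pow]; omega))
  have hX {n e : ℕ} {v v' : F[X]} (hn : n ≤ e) (hv : X ^ e ∣ v) : X ^ n ∣ v * v' :=
    ((pow_dvd_pow X hn).trans hv).mul_right v'
  rw [show (1 + X) ^ w * E * f + -((1 + X) ^ w * B) * h = (1 + X) ^ w * (E * f - B * h) by ring,
    show -((1 + X) ^ w * C) * f + (1 + X) ^ w * A * h = (1 + X) ^ w * (A * h - C * f) by ring]
  refine exists_mem_syz_smul_eq ?_ ?_ ?_ ?_ ?_ ?_ ?_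
  · exact (dvd_sub (hf.mul_left E) (hX (by omega) hM.X_dvd_B)).mul_left _
  · exact (dvd_sub (hM.X_dvd_A.mul_right h)
      (((pow_dvd_pow X (Nat.le_add_right a i)).trans hf).mul_left C)).mul_left _
  · rw [mul_sub]
    exact dvd_sub ((hM.X1_dvd_E.mul_right f).mul_left _)
      (pow_dvd_mul_of_le dvd_rfl (hh.mul_left B) hbk)
  · rw [mul_sub]
    exact dvd_sub (pow_dvd_mul_of_le dvd_rfl (pow_dvd_mul_of_le hM.X1_dvd_A hh le_rfl) (by omega))
      (pow_dvd_mul_of_le dvd_rfl (hM.X1_dvd_C.mul_right f) (by omega))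
  · refine mul_mem_degLT dw (w := m + a + b - w) ?_ (by omega)
    rw [show E * f - B * h = (B + E) * f - B * (f + h) by ring]
    exact sub_mem (mul_mem_degLT hM.deg_BE df (by omega)) (mul_mem_degLT hM.deg_B dfh (by omega))
  · refine mul_mem_degLT dw (w := m + a + b - w) ?_ (by omega)
    rw [show A * h - C * f = (A + C) * h - C * (f + h) by ring]
    exact sub_mem (mul_mem_degLT hM.deg_AC dh (by omega)) (mul_mem_degLT hM.deg_C dfh (by omega))
  · rw [← mul_add]
    refine mul_mem_degLT dw (w := m + a + b - l - w) ?_ (by omega)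
    rw [show E * f - B * h + (A * h - C * f) =
      (E - C) * (f + h) - (B + E - (A + C)) * h by ring]
    exact sub_mem (mul_mem_degLT (sub_mem hM.deg_E hM.deg_C) dfh (by omega))
      (mul_mem_degLT hM.deg_sub dh (by omega))

/-- The matrix and its adjugate embed the two syzygy spaces into each other, up to factors
`(1 + X) ^ w` and `X ^ a (1 + X) ^ b`. -/
theorem finrank_syz_eq (hM : IsSyzMatrix u a b c d eA eC A B C E) (hi : i ≤ u) (hl : l ≤ u)
    (hwA : w ≤ eA) (hwj : w ≤ j) (hkC : w + k ≤ eC) (hkj : w + k ≤ b + j) (hbk : b ≤ w + k)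
    (hjA : b + j ≤ eA + w + k) (hjC : b + j ≤ eC + w) :
    Module.finrank F (syz F (a + i) k (c + l) (m + d - w)) =
      Module.finrank F (syz F i j l m) := by
  have hadj :
      (1 + X) ^ w * E * ((1 + X) ^ w * A) - -((1 + X) ^ w * B) * -((1 + X) ^ w * C) ≠ 0 := by
    rw [show (1 + X) ^ w * E * ((1 + X) ^ w * A) - -((1 + X) ^ w * B) * -((1 + X) ^ w * C) =
      ((1 + X) ^ w) ^ 2 * (A * E - B * C) by ring]
    exact mul_ne_zero (pow_ne_zero 2 (monic_one_add_X_pow w).ne_zero) hM.det_ne_zero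
  exact le_antisymm
    (finrank_le_of_mulMat hadj (X ^ a * (1 + X) ^ b) fun f h hfh =>
      hM.exists_smul_eq_mulMat_adjugate hi hl hbk hjA hjC hfh)
    (finrank_le_of_mulMat hM.det_ne_zero ((1 + X) ^ w) fun f h hfh =>
      hM.exists_smul_eq_mulMat hi hl hwA hwj hkC hkj hfh)

end IsSyzMatrix

end FrobeniusTransfer

section SyzMatrices

variable {F : Type*} [Field F] {A B C E f h : F[X]} {a b c d e : ℕ}

theorem not_X_pow_succ_dvd_of_mem_syz (p : ℕ) [CharP F p] (hsum : a + 1 + b + c = 2 * d)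
    (hd : d ≤ p) (ha : a + 1 ≤ b + c) (hb : b ≤ a + 1 + c) (hc : c ≤ a + 1 + b)
    (hx : (f, h) ∈ syz F a b c d) (hne : (f, h) ≠ 0) : ¬ X ^ (a + 1) ∣ f := fun hf =>
  hne (eq_zero_of_mem_syz p hsum hd ha hb hc (mem_syz_succ_left hx hf))

theorem coeff_add_ne_zero_of_mem_syz (p : ℕ) [CharP F p] (hsum : a + b + (c + 1) = 2 * d)
    (hd : d ≤ p) (ha : a ≤ b + (c + 1)) (hb : b ≤ a + (c + 1)) (hc : c + 1 ≤ a + b)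
    (he : d = c + e + 1) (hx : (f, h) ∈ syz F a b c d) (hne : (f, h) ≠ 0) :
    (f + h).coeff e ≠ 0 := fun h0 =>
  hne (eq_zero_of_mem_syz p hsum hd ha hb hc (mem_syz_succ_right hx (by omega) h0))

/-- If the determinant vanished, the second column could be divided by `X`, giving a syzygy of
too small degree. -/
theorem det_ne_zero_of_mem_syz (p : ℕ) [CharP F p] (hsum : a + b + c = 2 * d) (hd : d ≤ p)
    (ha : a ≤ b + c) (hb : b ≤ a + c) (hc : c ≤ a + b) (hA : X ^ a ∣ A)
    (hA' : ¬ X ^ (a + 1) ∣ A) (hBE : (B, E) ∈ syz F (a + 1) b c (d + 1)) (hne : (B, E) ≠ 0) :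
    A * E - B * C ≠ 0 := by
  intro h0
  obtain ⟨hB, hE, dB, dE, dBE⟩ := mem_syz.1 hBE
  obtain ⟨A', rfl⟩ := hA
  obtain ⟨B', rfl⟩ := hB
  have hX : ¬ X ∣ A' := fun h => hA' (by rw [pow_succ]; exact mul_dvd_mul_left _ h)
  have hcancel : A' * E = X * (B' * C) := by
    apply mul_left_cancel₀ (pow_ne_zero a (X_ne_zero (R := F)))
    linear_combination h0
  obtain ⟨E', rfl⟩ := (prime_X.dvd_or_dvd (Dvd.intro _ hcancel.symm)).resolve_left hX
  have hdiv {z : ℤ} {v : F[X]} (hv : X * v ∈ degLT F z) : v ∈ degLT F (z - 1) := by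
    rwa [mul_mem_degLT_iff_of_monic monic_X, natDegree_X] at hv
  rw [pow_succ', mul_assoc] at dB dBE
  rw [← mul_add] at dBE
  have hquot : (X ^ a * B', E') ∈ syz F a b c d :=
    mem_syz.2 ⟨dvd_mul_right _ _, isCoprime_X_one_add_X.symm.pow_left.dvd_of_dvd_mul_left hE,
      degLT_mono (by omega) (hdiv dB), degLT_mono (by omega) (hdiv dE),
      degLT_mono (by omega) (hdiv dBE)⟩
  obtain ⟨hB', hE'⟩ := Prod.mk_eq_zero.1 (eq_zero_of_mem_syz p hsum hd ha hb hc hquot)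
  exact hne (by rw [hE', pow_succ', mul_assoc, hB', mul_zero, Prod.mk_zero_zero])

theorem exists_isSyzMatrix (p : ℕ) [CharP F p] (hsum : a + b + c = 2 * d) (hd : d + 1 ≤ p)
    (ha : a ≤ b + c) (hb : b ≤ a + c) (hc : c ≤ a + b) (hAC : (A, C) ∈ syz F a b c (d + 1))
    (hA : ¬ X ^ (a + 1) ∣ A) (hcoeff : (A + C).coeff (d - c) ≠ 0) {eA eC : ℕ}
    (hA' : (1 + X) ^ eA ∣ A) (hC' : (1 + X) ^ eC ∣ C) :
    ∃ A B C E : F[X], IsSyzMatrix 1 a b c d eA eC A B C E := by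
  obtain ⟨B, E, hBE, hne⟩ := exists_mem_syz_ne_zero (F := F) (r := a + 1) (k := b) (s := c)
    (m := (d + 1 : ℕ)) (by omega)
  have hcoeff' : (B + E).coeff (d - c) ≠ 0 :=
    coeff_add_ne_zero_of_mem_syz p (by omega) hd (by omega) (by omega) (by omega) (by omega) hBE hne
  push_cast at hBE
  -- rescale the first column so that both columns have the same leading coefficient at infinity
  set t : F := (B + E).coeff (d - c) / (A + C).coeff (d - c) with ht
  have ht0 : t ≠ 0 := div_ne_zero hcoeff' hcoeff
  have htA : ¬ X ^ (a + 1) ∣ t • A := by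
    rwa [smul_eq_C_mul, (isUnit_C.2 (IsUnit.mk0 t ht0)).dvd_mul_left]
  obtain ⟨hA₁, -, dA, dC, dAC⟩ := mem_syz.1 (Submodule.smul_mem _ t hAC)
  obtain ⟨hB₁, hE₁, dB, dE, dBE⟩ := mem_syz.1 hBE
  refine ⟨t • A, B, t • C, E, hsum, hA₁, hB₁, hE₁, dvd_smul_of_dvd t hA', dvd_smul_of_dvd t hC',
    dA, dB, dC, dE, dAC, dBE, ?_,
    det_ne_zero_of_mem_syz p hsum (by omega) ha hb hc hA₁ htA hBE hne⟩
  have hdiff : (B + E - (t • A + t • C)).coeff (d - c) = 0 := by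
    rw [coeff_sub, ← smul_add, coeff_smul, ht, smul_eq_mul, div_mul_cancel₀ _ hcoeff, sub_self]
  exact degLT_mono (by omega) (mem_degLT_sub_one (degLT_mono (by omega) (sub_mem dBE dAC)) hdiff)

/-- The first column is a syzygy for `(a, b + 1, c)`. -/
theorem exists_isSyzMatrix_plus (p : ℕ) [CharP F p] (hsum : a + b + c = 2 * d) (hd : d + 1 ≤ p)
    (ha : a ≤ b + c) (hb : b ≤ a + c) (hc : c ≤ a + b) :
    ∃ A B C E : F[X], IsSyzMatrix 1 a b c d 0 (b + 1) A B C E := by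
  obtain ⟨A, C, hAC, hne⟩ := exists_mem_syz_ne_zero (F := F) (r := a) (k := b + 1) (s := c)
    (m := (d + 1 : ℕ)) (by omega)
  have hA := not_X_pow_succ_dvd_of_mem_syz p (by omega) hd (by omega) (by omega) (by omega) hAC hne
  have hcoeff := coeff_add_ne_zero_of_mem_syz (e := d - c) p (by omega) hd (by omega) (by omega)
    (by omega) (by omega) hAC hne
  obtain ⟨hA₁, hC₁, hdeg⟩ := mem_syz.1 hAC
  push_cast at hdeg
  exact exists_isSyzMatrix p hsum hd ha hb hc
    (mem_syz.2 ⟨hA₁, (pow_dvd_pow _ b.le_succ).trans hC₁, hdeg⟩) hA hcoeff (by simp) hC₁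

/-- The first column is `1 + X` times a syzygy for `(a, b - 1, c)`. -/
theorem exists_isSyzMatrix_minus (p : ℕ) [CharP F p] (hsum : a + (b + 1) + c = 2 * d)
    (hd : d + 1 ≤ p) (ha : a + 1 ≤ b + c) (hb : b + 1 ≤ a + c) (hc : c + 1 ≤ a + b) :
    ∃ A B C E : F[X], IsSyzMatrix 1 a (b + 1) c d 1 (b + 1) A B C E := by
  obtain ⟨A, C, hAC, hne⟩ := exists_mem_syz_ne_zero (F := F) (r := a) (k := b) (s := c) (m := d)
    (by omega)
  have hA := not_X_pow_succ_dvd_of_mem_syz p (by omega) (by omega) (by omega) (by omega)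
    (by omega) hAC hne
  have hcoeff := coeff_add_ne_zero_of_mem_syz (e := d - c - 1) p (by omega) (by omega) (by omega)
    (by omega) (by omega) (by omega) hAC hne
  obtain ⟨hA₁, hC₁, dA, dC, dAC⟩ := mem_syz.1 hAC
  have hX1 {v : F[X]} {z : ℤ} (hv : v ∈ degLT F z) : (1 + X) * v ∈ degLT F (z + 1) := by
    have hmonic := mul_mem_degLT_iff_of_monic (f := v) (z := z + 1) (monic_one_add_X_pow (F := F) 1)
    rw [natDegree_one_add_X_pow, pow_one, Nat.cast_one, add_sub_cancel_right] at hmonic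
    exact hmonic.2 hv
  have hmem : ((1 + X) * A, (1 + X) * C) ∈ syz F a (b + 1) c (d + 1) := by
    refine mem_syz.2 ⟨hA₁.mul_left _, ?_, hX1 dA, hX1 dC, ?_⟩
    · rw [pow_succ']
      exact mul_dvd_mul_left _ hC₁
    · rw [← mul_add]
      exact degLT_mono (by omega) (hX1 dAC)
  refine exists_isSyzMatrix p hsum hd (by omega) (by omega) (by omega) hmem ?_ ?_ (by simp) ?_
  · exact fun h => hA (isCoprime_X_one_add_X.pow_left.dvd_of_dvd_mul_left h)
  · rw [← mul_add, show d - c = d - c - 1 + 1 by omega, add_mul, one_mul, coeff_add, coeff_X_mul,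
      mem_degLT_iff_coeff.1 dAC (d - c - 1 + 1) (by omega), zero_add]
    exact hcoeff
  · rw [pow_succ']
    exact mul_dvd_mul_left _ hC₁

end SyzMatrices

section TransferOfSyzygies

variable {F : Type*} [Field F] {q a b c d i j l : ℕ}

theorem finrank_syz_mul_add (p : ℕ) [CharP F p] (hq : (1 + X : F[X]) ^ q = 1 + X ^ q)
    (hsum : a + b + c = 2 * d) (hd : d + 1 ≤ p) (ha : a ≤ b + c) (hb : b ≤ a + c)
    (hc : c ≤ a + b) (hq0 : 0 < q) (hi : i ≤ q) (hj : j ≤ q) (hl : l ≤ q) (m : ℤ) :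
    Module.finrank F (syz F (a * q + i) (b * q + j) (c * q + l) (m + d * q)) =
      Module.finrank F (syz F i j l m) := by
  obtain ⟨A, B, C, E, hM⟩ := exists_isSyzMatrix_plus (F := F) p hsum hd ha hb hc
  have h := (hM.expand hq0 hq).finrank_syz_eq (i := i) (j := j) (l := l) (m := m) (w := 0)
    (k := b * q + j) (by omega) (by omega) (by omega) (by omega) (by linarith) (by omega)
    (by omega) (by omega) (by linarith)
  rwa [Nat.cast_zero, sub_zero, Nat.cast_mul] at h

theorem finrank_syz_mul_sub (p : ℕ) [CharP F p] (hq : (1 + X : F[X]) ^ q = 1 + X ^ q)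
    (hsum : a + b + c = 2 * d) (hd : d + 1 ≤ p) (ha : a + 2 ≤ b + c) (hb : b ≤ a + c)
    (hc : c + 2 ≤ a + b) (hq0 : 0 < q) (hi : i ≤ q) (hj : j ≤ q) (hl : l ≤ q) (m : ℤ) :
    Module.finrank F (syz F (a * q + i) (b * q - j) (c * q + l) (m + d * q - j)) =
      Module.finrank F (syz F i j l m) := by
  obtain ⟨b, rfl⟩ : ∃ b', b = b' + 1 := ⟨b - 1, by omega⟩
  obtain ⟨A, B, C, E, hM⟩ := exists_isSyzMatrix_minus (F := F) p hsum hd (by omega) hb (by omega)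
  have hjb : j ≤ (b + 1) * q := by nlinarith
  simpa using (hM.expand hq0 hq).finrank_syz_eq (i := i) (j := j) (l := l) (m := m) (w := j)
    (k := (b + 1) * q - j) (by omega) (by omega) (by omega) le_rfl (by omega) (by omega)
    (by omega) (by omega) (by omega)

end TransferOfSyzygies

section KernelDimension

open Finset.HasAntidiagonal (antidiagonal mem_antidiagonal)

variable {F : Type*} [Field F] {r s : ℕ} {v : Fin r × Fin s → F}

/-- The `(i, j)` entry of `v`, extended by `0` outside the `r × s` rectangle. -/
def entry (F : Type*) [Field F] (r s i j : ℕ) : (Fin r × Fin s → F) →ₗ[F] F :=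
  if h : i < r ∧ j < s then LinearMap.proj (⟨i, h.1⟩, ⟨j, h.2⟩) else 0

@[simp]
theorem entry_fin (v : Fin r × Fin s → F) (x : Fin r × Fin s) : entry F r s x.1 x.2 v = v x := by
  simp [entry]

theorem entry_eq_zero {i j : ℕ} (h : r ≤ i ∨ s ≤ j) : entry F r s i j = 0 :=
  dif_neg (by omega)

theorem eq_zero_of_entry_eq_zero (h : ∀ i j, entry F r s i j v = 0) : v = 0 :=
  funext fun x => by rw [← entry_fin v x, h, Pi.zero_apply]

/-- The sum of the two lowering operators of a rectangle: the nilpotent operator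
`N ⊗ 1 + 1 ⊗ N`, where `N` is the nilpotent Jordan block. -/
def lowering (F : Type*) [Field F] (r s : ℕ) : Module.End F (Fin r × Fin s → F) :=
  LinearMap.pi fun x => entry F r s (x.1 + 1) x.2 + entry F r s x.1 (x.2 + 1)

theorem entry_lowering (v : Fin r × Fin s → F) (i j : ℕ) :
    entry F r s i j (lowering F r s v) = entry F r s (i + 1) j v + entry F r s i (j + 1) v := by
  by_cases h : i < r ∧ j < s
  · rw [entry, dif_pos h, lowering]
    rfl
  · rw [entry_eq_zero (by omega), entry_eq_zero (by omega), entry_eq_zero (by omega)]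
    simp

/-- The pairing of the antidiagonal `i + j = e` of `v` with polynomials, for which `X ^ i` is dual
to the entry `(i, j)`. It turns the lowering operator into multiplication by `1 + X`. -/
noncomputable def pairing (v : Fin r × Fin s → F) (e : ℕ) : F[X] →ₗ[F] F :=
  ∑ x ∈ antidiagonal e, entry F r s x.1 x.2 v • lcoeff F x.1

theorem pairing_apply (v : Fin r × Fin s → F) (e : ℕ) (f : F[X]) :
    pairing v e f = ∑ x ∈ antidiagonal e, entry F r s x.1 x.2 v * f.coeff x.1 := by
  simp [pairing]

theorem pairing_X_pow (v : Fin r × Fin s → F) (i j : ℕ) :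
    pairing v (i + j) (X ^ i) = entry F r s i j v := by
  rw [pairing_apply, Finset.sum_eq_single (i, j)]
  · simp
  · rintro ⟨a, b⟩ hab hne
    have : a ≠ i := by
      rintro rfl
      exact hne (by simpa using hab)
    simp [coeff_X_pow, this]
  · simp

theorem pairing_lowering (v : Fin r × Fin s → F) {e : ℕ} {f : F[X]} (hf : f ∈ degLT F (e + 1)) :
    pairing (lowering F r s v) e f = pairing v (e + 1) ((1 + X) * f) := by
  have htop : f.coeff (e + 1) = 0 := mem_degLT_iff_coeff.1 hf (e + 1) (by simp)
  rw [add_mul, one_mul, map_add, pairing_apply v, pairing_apply v,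
    Finset.Nat.sum_antidiagonal_succ', Finset.Nat.sum_antidiagonal_succ, pairing_apply]
  simp only [htop, coeff_X_mul_zero, coeff_X_mul, entry_lowering, add_mul,
    Finset.sum_add_distrib]
  ring

theorem pairing_lowering_pow (v : Fin r × Fin s → F) (k : ℕ) {e : ℕ} {f : F[X]}
    (hf : f ∈ degLT F (e + 1)) :
    pairing ((lowering F r s ^ k) v) e f = pairing v (e + k) ((1 + X) ^ k * f) := by
  induction k generalizing v with
  | zero => simp
  | succ k ih =>
    have hdeg : (1 + X) ^ k * f ∈ degLT F ((e + k : ℕ) + 1) := by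
      rw [mul_mem_degLT_iff_of_monic (monic_one_add_X_pow k), natDegree_one_add_X_pow]
      simpa [add_sub_right_comm] using hf
    rw [pow_succ, Module.End.mul_apply, ih, pairing_lowering v hdeg, ← mul_assoc, ← pow_succ',
      add_assoc]

theorem entry_lowering_pow (v : Fin r × Fin s → F) (k i j : ℕ) :
    entry F r s i j ((lowering F r s ^ k) v) = pairing v (i + j + k) ((1 + X) ^ k * X ^ i) := by
  rw [← pairing_X_pow, pairing_lowering_pow]
  exact mem_degLT_iff_natDegree.2 (Or.inr (by rw [natDegree_X_pow]; omega))

theorem pairing_eq_zero_of_mem_multiplesLT_X_pow {e : ℕ} {z : ℤ} {f : F[X]}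
    (hf : f ∈ multiplesLT (X ^ r) z) : pairing v e f = 0 := by
  rw [pairing_apply]
  refine Finset.sum_eq_zero fun x _ => ?_
  rcases le_or_gt r x.1 with hx | hx
  · simp [entry_eq_zero (Or.inl hx)]
  · rw [X_pow_dvd_iff.1 (mem_multiplesLT.1 hf).1 x.1 hx, mul_zero]

theorem pairing_eq_zero_of_mem_degLT {e : ℕ} {f : F[X]} (hf : f ∈ degLT F (e + 1 - s)) :
    pairing v e f = 0 := by
  rw [pairing_apply]
  refine Finset.sum_eq_zero fun x hx => ?_
  rw [mem_antidiagonal] at hx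
  rcases le_or_gt s x.2 with hx2 | hx2
  · simp [entry_eq_zero (Or.inr hx2)]
  · rw [mem_degLT_iff_coeff.1 hf x.1 (by omega), mul_zero]

/-- The polynomials of degree at most `e` on which `pairing v e` vanishes for every `v` in the
kernel of the `k`-th power of the lowering operator. -/
noncomputable def pairingKer (F : Type*) [Field F] (r k s e : ℕ) : Submodule F F[X] :=
  multiplesLT (X ^ r) (e + 1) ⊔ degLT F (e + 1 - s) ⊔ multiplesLT ((1 + X) ^ k) (e + 1)

theorem pairingKer_le_degLT (r k s e : ℕ) : pairingKer F r k s e ≤ degLT F (e + 1) :=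
  sup_le (sup_le inf_le_right (degLT_mono (by omega))) inf_le_right

theorem mem_ker_lowering_pow_iff {k : ℕ} : v ∈ LinearMap.ker (lowering F r s ^ k) ↔
    ∀ e, pairingKer F r k s e ≤ LinearMap.ker (pairing v e) := by
  rw [LinearMap.mem_ker]
  constructor
  · refine fun hv e => sup_le (sup_le ?_ ?_) ?_
    · exact fun f hf => pairing_eq_zero_of_mem_multiplesLT_X_pow hf
    · exact fun f hf => pairing_eq_zero_of_mem_degLT hf
    · intro f hf
      obtain ⟨⟨t, rfl⟩, ht⟩ := mem_multiplesLT.1 hf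
      rw [mul_mem_degLT_iff_of_monic (monic_one_add_X_pow k), natDegree_one_add_X_pow] at ht
      rcases lt_or_ge e k with hek | hke
      · rw [eq_zero_of_mem_degLT ht (by omega), mul_zero, LinearMap.mem_ker, map_zero]
      · obtain ⟨e, rfl⟩ := Nat.exists_eq_add_of_le' hke
        have ht' : t ∈ degLT F (e + 1) := by
          convert ht using 2
          push_cast
          ring
        rw [LinearMap.mem_ker, ← pairing_lowering_pow v k ht', hv]
        simp [pairing_apply]
  · refine fun hv => eq_zero_of_entry_eq_zero fun i j => ?_
    rw [entry_lowering_pow]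
    refine hv (i + j + k) (Submodule.mem_sup_right (mem_multiplesLT.2 ⟨dvd_mul_right _ _, ?_⟩))
    rw [mul_mem_degLT_iff_of_monic (monic_one_add_X_pow k), natDegree_one_add_X_pow,
      mem_degLT_iff_natDegree, natDegree_X_pow]
    right
    omega

theorem X_pow_mem_degLT {i : ℕ} {z : ℤ} (h : i < z) : (X ^ i : F[X]) ∈ degLT F z :=
  mem_degLT_iff_natDegree.2 (Or.inr (by rwa [natDegree_X_pow]))

theorem pairing_eq_of_X_pow {e : ℕ} {ψ : F[X] →ₗ[F] F}
    (h : ∀ i j, i + j = e → entry F r s i j v = ψ (X ^ i)) {f : F[X]} (hf : f ∈ degLT F (e + 1)) :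
    pairing v e f = ψ f := by
  have hdeg : f.natDegree < e + 1 := by
    rcases mem_degLT_iff_natDegree.1 hf with rfl | hf <;> [simp; omega]
  rw [f.as_sum_range' (e + 1) hdeg, map_sum, map_sum]
  refine Finset.sum_congr rfl fun i hi => ?_
  obtain ⟨j, rfl⟩ := Nat.exists_eq_add_of_le (Nat.lt_succ_iff.1 (Finset.mem_range.1 hi))
  rw [← C_mul_X_pow_eq_monomial, ← smul_eq_C_mul, map_smul, map_smul, pairing_X_pow, h i j rfl]

theorem exists_pairing_eq {ψ : ℕ → F[X] →ₗ[F] F}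
    (hψ : ∀ e : ℕ, multiplesLT (X ^ r) (e + 1) ⊔ degLT F (e + 1 - s) ≤ LinearMap.ker (ψ e)) :
    ∃ v : Fin r × Fin s → F, ∀ e : ℕ, ∀ f ∈ degLT F (e + 1), pairing v e f = ψ e f := by
  let v : Fin r × Fin s → F := fun x => ψ (x.1 + x.2) (X ^ (x.1 : ℕ))
  refine ⟨v, fun e f => pairing_eq_of_X_pow ?_⟩
  rintro i j rfl
  by_cases hij : i < r ∧ j < s
  · exact entry_fin v (⟨i, hij.1⟩, ⟨j, hij.2⟩)
  rw [entry_eq_zero (by omega), LinearMap.zero_apply]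
  refine (hψ (i + j) ?_).symm
  rcases le_or_gt r i with hi | hi
  · exact Submodule.mem_sup_left
      (mem_multiplesLT.2 ⟨pow_dvd_pow X hi, X_pow_mem_degLT (by omega)⟩)
  · exact Submodule.mem_sup_right (X_pow_mem_degLT (by omega))

/-- The antidiagonal pairings of a vector in the kernel of the `k`-th power of the lowering
operator. -/
noncomputable def kerToDual (F : Type*) [Field F] (r s k E : ℕ) :
    LinearMap.ker (lowering F r s ^ k) →ₗ[F]
      (e : Fin E) → ((pairingKer F r k s e).submoduleOf (degLT F ((e : ℕ) + 1))).dualAnnihilator :=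
  LinearMap.pi fun e =>
    { toFun := fun v => ⟨(pairing v.1 e).domRestrict _, (Submodule.mem_dualAnnihilator _).2
        fun f hf => mem_ker_lowering_pow_iff.1 v.2 e hf⟩
      map_add' := fun v w => by
        ext f
        simp [pairing_apply, add_mul, Finset.sum_add_distrib]
      map_smul' := fun t v => by
        ext f
        simp [pairing_apply, mul_assoc, Finset.mul_sum] }

theorem kerToDual_injective (k : ℕ) {E : ℕ} (hE : r + s ≤ E + 1) :
    Function.Injective (kerToDual F r s k E) := by
  rw [injective_iff_map_eq_zero]
  intro v hv
  refine Subtype.ext (eq_zero_of_entry_eq_zero fun i j => ?_)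
  by_cases hij : r ≤ i ∨ s ≤ j
  · rw [entry_eq_zero hij, LinearMap.zero_apply]
  · have h := congrArg Subtype.val (congrFun hv ⟨i + j, by omega⟩)
    rw [← pairing_X_pow]
    exact LinearMap.congr_fun h ⟨X ^ i, X_pow_mem_degLT (by push_cast; omega)⟩

theorem kerToDual_surjective (k E : ℕ) :
    Function.Surjective (kerToDual F r s k E) := by
  intro ψ
  choose Ψ hΨ using fun e => LinearMap.exists_extend (ψ e).1
  let Ψ' : ℕ → F[X] →ₗ[F] F := fun e => if h : e < E then Ψ ⟨e, h⟩ else 0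
  have hzero : ∀ e, pairingKer F r k s e ≤ LinearMap.ker (Ψ' e) := fun e f hf => by
    by_cases he : e < E
    · have h := (Submodule.mem_dualAnnihilator _).1 (ψ ⟨e, he⟩).2
        ⟨f, pairingKer_le_degLT r k s e hf⟩ hf
      rw [← hΨ] at h
      simpa [Ψ', he] using h
    · simp [Ψ', he]
  obtain ⟨v, hpair⟩ := exists_pairing_eq (r := r) (s := s) (ψ := Ψ') fun e =>
    le_sup_left.trans (hzero e)
  refine ⟨⟨v, mem_ker_lowering_pow_iff.2 fun e f hf => ?_⟩, ?_⟩
  · rw [LinearMap.mem_ker, hpair e f (pairingKer_le_degLT r k s e hf)]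
    exact hzero e hf
  · funext e
    refine Subtype.ext (LinearMap.ext fun f => ?_)
    rw [← hΨ]
    exact (hpair e f f.2).trans (by simp [Ψ'])

/-- The dimension of the kernel of the `k`-th power of the lowering operator. -/
noncomputable def kdim (F : Type*) [Field F] (r s k : ℕ) : ℕ :=
  Module.finrank F (LinearMap.ker (lowering F r s ^ k))

theorem finrank_pairingKer_add_finrank_syz (r k s e : ℕ) :
    Module.finrank F (pairingKer F r k s e) + Module.finrank F (syz F r k s (e + 1)) =
      (e + 1 - r) + (e + 1 - s) + (e + 1 - k) := by
  rw [pairingKer, add_comm, finrank_syz_add_finrank_sup]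
  omega

theorem finrank_dualAnnihilator_pairingKer (r k s e : ℕ) :
    Module.finrank F ((pairingKer F r k s e).submoduleOf (degLT F ((e : ℕ) + 1))).dualAnnihilator +
      ((e + 1 - r) + (e + 1 - s) + (e + 1 - k)) =
      e + 1 + Module.finrank F (syz F r k s (e + 1)) := by
  have h := Subspace.finrank_add_finrank_dualAnnihilator_eq
    ((pairingKer F r k s e).submoduleOf (degLT F ((e : ℕ) + 1)))
  rw [(Submodule.submoduleOfEquivOfLe (pairingKer_le_degLT r k s e)).finrank_eq,
    finrank_degLT] at h
  have := finrank_pairingKer_add_finrank_syz (F := F) r k s e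
  omega

theorem kdim_add_sum (k : ℕ) {E : ℕ} (hE : r + s ≤ E + 1) :
    kdim F r s k + ∑ e ∈ Finset.range E, ((e + 1 - r) + (e + 1 - s) + (e + 1 - k)) =
      ∑ e ∈ Finset.range E, (e + 1 + Module.finrank F (syz F r k s (e + 1))) := by
  have hfree : ∀ e : Fin E, Module.Free F
      ((pairingKer F r k s e).submoduleOf (degLT F ((e : ℕ) + 1))).dualAnnihilator := fun e =>
    @Module.Free.of_divisionRing F _ _ (Submodule.addCommGroup (M := Module.Dual F _) _) _
  rw [kdim, (LinearEquiv.ofBijective _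
    ⟨kerToDual_injective (F := F) k hE, kerToDual_surjective k E⟩).finrank_eq,
    Module.finrank_pi_fintype, Fin.sum_univ_eq_sum_range (fun e => Module.finrank F
      ((pairingKer F r k s e).submoduleOf (degLT F ((e : ℕ) + 1))).dualAnnihilator),
    ← Finset.sum_add_distrib]
  exact Finset.sum_congr rfl fun e _ => finrank_dualAnnihilator_pairingKer r k s e

end KernelDimension

section SyzygyGap

variable {F : Type*} [Field F] {r s k r' s' k' : ℕ}

/-- The square of the syzygy gap of `(x ^ r, y ^ s, (x + y) ^ k)`: the amount by which
`4 * kdim F r s k` exceeds the value it would have if the two generators of the syzygy module had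
equal degrees. -/
noncomputable def syzGapSq (F : Type*) [Field F] (r s k : ℕ) : ℤ :=
  4 * kdim F r s k - (2 * (r * s + r * k + s * k) - r ^ 2 - s ^ 2 - k ^ 2)

theorem two_mul_sum_range_sub (r E : ℕ) :
    2 * ∑ e ∈ Finset.range E, (e + 1 - r) = (E - r) * (E - r + 1) := by
  induction E with
  | zero => simp
  | succ E ih =>
    rw [Finset.sum_range_succ, mul_add, ih]
    rcases le_or_gt r E with h | h
    · rw [Nat.sub_add_comm h]
      ring
    · rw [Nat.sub_eq_zero_of_le h, Nat.sub_eq_zero_of_le h.le]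

theorem finrank_syz_eq_zero {m : ℤ} (hm : m ≤ 0) : Module.finrank F (syz F r k s m) = 0 := by
  have := finrank_syz_add_finrank_sup (F := F) r k s m
  omega

theorem syzGapSq_eq_sum {E : ℕ} (hE : r + s + k ≤ E) :
    syzGapSq F r s k = 4 * ∑ e ∈ Finset.range E, (Module.finrank F (syz F r k s (e + 1)) : ℤ) -
      (2 * E - (r + s + k)) * (2 * E - (r + s + k) + 2) := by
  have hkdim := kdim_add_sum (F := F) k (show r + s ≤ E + 1 by omega)
  simp only [Finset.sum_add_distrib (f := fun _ => _ - r + _), Finset.sum_add_distrib] at hkdim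
  have hE0 := two_mul_sum_range_sub 0 E
  have hr := two_mul_sum_range_sub r E
  have hs := two_mul_sum_range_sub s E
  have hk := two_mul_sum_range_sub k E
  simp only [Nat.sub_zero, Finset.sum_add_distrib] at hE0
  zify [show r ≤ E by omega, show s ≤ E by omega, show k ≤ E by omega] at hkdim hE0 hr hs hk
  rw [syzGapSq]
  linear_combination 4 * hkdim + 2 * hE0 - 2 * hr - 2 * hs - 2 * hk

theorem syzGapSq_eq_of_finrank_syz {D : ℕ} (hD : r' + s' + k' = r + s + k + 2 * D)
    (h : ∀ m : ℤ, Module.finrank F (syz F r' k' s' (m + D)) =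
      Module.finrank F (syz F r k s m)) :
    syzGapSq F r' s' k' = syzGapSq F r s k := by
  have hlow : ∀ e ∈ Finset.range D, (Module.finrank F (syz F r' k' s' (e + 1)) : ℤ) = 0 :=
    fun e he => by
      rw [show (e + 1 : ℤ) = (e + 1 - D) + D by ring, h, finrank_syz_eq_zero, Nat.cast_zero]
      have := Finset.mem_range.1 he
      omega
  have hhigh : ∀ e : ℕ, Module.finrank F (syz F r' k' s' ((D + e : ℕ) + 1)) =
      Module.finrank F (syz F r k s (e + 1)) := fun e => by
    rw [← h, show ((D + e : ℕ) + 1 : ℤ) = e + 1 + D by push_cast; ring]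
  have hD' : (r' + s' + k' : ℤ) = r + s + k + 2 * D := by exact_mod_cast hD
  rw [syzGapSq_eq_sum (E := D + (r + s + k + D)) (by omega),
    syzGapSq_eq_sum (E := r + s + k + D) (by omega), Finset.sum_range_add,
    Finset.sum_eq_zero hlow, zero_add, hD']
  simp only [hhigh]
  push_cast
  ring

variable {a b c d i j l q : ℕ}

theorem syzGapSq_mul_add (p : ℕ) [CharP F p] (hq : (1 + X : F[X]) ^ q = 1 + X ^ q)
    (hsum : a + b + c = 2 * d) (hd : d + 1 ≤ p) (ha : a ≤ b + c) (hb : b ≤ a + c)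
    (hc : c ≤ a + b) (hq0 : 0 < q) (hi : i ≤ q) (hj : j ≤ q) (hl : l ≤ q) :
    syzGapSq F (a * q + i) (c * q + l) (b * q + j) = syzGapSq F i l j := by
  refine syzGapSq_eq_of_finrank_syz (D := d * q) ?_ fun m => ?_
  · linear_combination q * hsum
  · rw [Nat.cast_mul, finrank_syz_mul_add p hq hsum hd ha hb hc hq0 hi hj hl]

theorem syzGapSq_mul_sub (p : ℕ) [CharP F p] (hq : (1 + X : F[X]) ^ q = 1 + X ^ q)
    (hsum : a + b + c = 2 * d) (hd : d + 1 ≤ p) (ha : a + 2 ≤ b + c) (hb : b ≤ a + c)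
    (hc : c + 2 ≤ a + b) (hq0 : 0 < q) (hi : i ≤ q) (hj : j ≤ q) (hl : l ≤ q) :
    syzGapSq F (a * q + i) (c * q + l) (b * q - j) = syzGapSq F i l j := by
  have hjb : j ≤ b * q := by nlinarith
  have hjd : j ≤ d * q := by nlinarith
  refine syzGapSq_eq_of_finrank_syz (D := d * q - j) ?_ fun m => ?_
  · zify [hjb, hjd] at hsum ⊢
    linear_combination q * hsum
  · rw [← finrank_syz_mul_sub p hq hsum hd ha hb hc hq0 hi hj hl, Nat.cast_sub hjd,
      Nat.cast_mul, add_sub_assoc]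

end SyzygyGap

section KernelsOfExtremePowers

variable {F : Type*} [Field F] {r s k Q : ℕ}

theorem lowering_pow_eq_zero (hQ : (1 + X : F[X]) ^ Q = 1 + X ^ Q) (hr : r ≤ Q) (hs : s ≤ Q) :
    lowering F r s ^ Q = 0 := by
  refine LinearMap.ext fun v => eq_zero_of_entry_eq_zero fun i j => ?_
  rw [entry_lowering_pow, hQ, add_mul, one_mul, map_add, ← pow_add, add_assoc i, pairing_X_pow,
    add_comm j, ← add_assoc i, add_comm i, pairing_X_pow, entry_eq_zero (by omega),
    entry_eq_zero (by omega), LinearMap.zero_apply, add_zero]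

theorem kdim_eq_mul (hQ : (1 + X : F[X]) ^ Q = 1 + X ^ Q) (hr : r ≤ Q) (hs : s ≤ Q) (hk : Q ≤ k) :
    kdim F r s k = r * s := by
  rw [kdim, pow_eq_zero_of_le hk (lowering_pow_eq_zero hQ hr hs), LinearMap.ker_zero, finrank_top]
  simp

theorem entry_of_mem_ker_lowering {v : Fin r × Fin s → F} (hv : v ∈ LinearMap.ker (lowering F r s))
    (i j : ℕ) : entry F r s i j v = (-1) ^ j * entry F r s (i + j) 0 v := by
  induction j generalizing i with
  | zero => simp
  | succ j ih =>
    have h := entry_lowering v i j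
    rw [LinearMap.mem_ker.1 hv, map_zero] at h
    rw [eq_neg_of_add_eq_zero_right h.symm, ih, pow_succ, add_right_comm i 1 j, ← add_assoc]
    ring

theorem eq_zero_of_mem_ker_lowering {v : Fin r × Fin s → F}
    (hv : v ∈ LinearMap.ker (lowering F r s)) (h : ∀ i < min r s, entry F r s i 0 v = 0) :
    v = 0 := by
  refine eq_zero_of_entry_eq_zero fun i j => ?_
  rw [entry_of_mem_ker_lowering hv]
  rcases lt_or_ge (i + j) (min r s) with hlt | hge
  · rw [h _ hlt, mul_zero]
  rcases le_or_gt r (i + j) with hr | hr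
  · rw [entry_eq_zero (Or.inl hr), LinearMap.zero_apply, mul_zero]
  · have hs := entry_of_mem_ker_lowering hv (i + j - s) s
    rw [entry_eq_zero (Or.inr le_rfl), Nat.sub_add_cancel (by omega)] at hs
    rw [(mul_eq_zero.1 hs.symm).resolve_left (by simp), mul_zero]

theorem exists_mem_ker_lowering (w : Fin (min r s) → F) :
    ∃ v ∈ LinearMap.ker (lowering F r s), ∀ i : Fin (min r s), entry F r s i 0 v = w i := by
  let w' : ℕ → F := fun i => if h : i < min r s then w ⟨i, h⟩ else 0
  let v : Fin r × Fin s → F := fun x => (-1) ^ (x.2 : ℕ) * w' (x.1 + x.2)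
  have hv : ∀ i j, entry F r s i j v = (-1) ^ j * w' (i + j) := fun i j => by
    by_cases h : i < r ∧ j < s
    · exact entry_fin v (⟨i, h.1⟩, ⟨j, h.2⟩)
    · rw [entry_eq_zero (by omega), LinearMap.zero_apply,
        show w' (i + j) = 0 from dif_neg (by omega), mul_zero]
  refine ⟨v, LinearMap.mem_ker.2 (eq_zero_of_entry_eq_zero fun i j => ?_), fun i => ?_⟩
  · rw [entry_lowering, hv, hv, add_right_comm i 1 j, ← add_assoc, pow_succ]
    ring
  · rw [hv, pow_zero, one_mul, add_zero]
    exact dif_pos i.2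

theorem kdim_one (r s : ℕ) : kdim F r s 1 = min r s := by
  let φ : LinearMap.ker (lowering F r s) →ₗ[F] Fin (min r s) → F :=
    LinearMap.pi fun i => entry F r s i 0 ∘ₗ Submodule.subtype _
  have hinj : Function.Injective φ := (injective_iff_map_eq_zero φ).2 fun v hφ =>
    Subtype.ext (eq_zero_of_mem_ker_lowering v.2 fun i hi => congrFun hφ ⟨i, hi⟩)
  have hsurj : Function.Surjective φ := fun w =>
    let ⟨v, hv, hvw⟩ := exists_mem_ker_lowering w
    ⟨⟨v, hv⟩, funext hvw⟩
  rw [kdim, pow_one, (LinearEquiv.ofBijective φ ⟨hinj, hsurj⟩).finrank_eq,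
    Module.finrank_fin_fun]

theorem coeff_one_add_X_pow_sub_one_ne_zero (hQ : (1 + X : F[X]) ^ Q = 1 + X ^ Q) {i : ℕ}
    (hi : i < Q) : ((1 + X : F[X]) ^ (Q - 1)).coeff i ≠ 0 := by
  have h : (1 + X : F[X]) ^ (Q - 1) + X * (1 + X) ^ (Q - 1) = 1 + X ^ Q := by
    rw [← hQ, ← Nat.sub_add_cancel (show 1 ≤ Q by omega), pow_succ, Nat.add_sub_cancel]
    ring
  induction i with
  | zero =>
    have h0 := congrArg (fun f => coeff f 0) h
    simp only [coeff_add, coeff_X_mul_zero, add_zero, coeff_one_zero, coeff_X_pow,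
      if_neg hi.ne] at h0
    rw [h0]
    exact one_ne_zero
  | succ i ih =>
    have hi1 := congrArg (fun f => coeff f (i + 1)) h
    simp only [coeff_add, coeff_X_mul, coeff_X_pow, if_neg hi.ne, coeff_one, Nat.succ_ne_zero,
      if_false, add_zero] at hi1
    rw [eq_neg_of_add_eq_zero_left hi1]
    exact neg_ne_zero.2 (ih (by omega))

/-- The only entry in the row `r - 1` that contributes to the entry `(0, e)` of the image is moved
there with the coefficient of `X ^ (r - 1)` in `(1 + X) ^ (Q - 1)`. -/
theorem exists_entry_lowering_pow_sub_one_eq (hQ : (1 + X : F[X]) ^ Q = 1 + X ^ Q) (hr0 : 0 < r)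
    (hr : r ≤ Q) (w : Fin (r + s - Q) → F) :
    ∃ v, ∀ e : Fin (r + s - Q), entry F r s 0 e ((lowering F r s ^ (Q - 1)) v) = w e := by
  let t := ((1 + X : F[X]) ^ (Q - 1)).coeff (r - 1)
  let v : Fin r × Fin s → F := fun x =>
    if h : (x.1 : ℕ) = r - 1 ∧ Q - r ≤ x.2 then t⁻¹ * w ⟨x.2 - (Q - r), by omega⟩ else 0
  refine ⟨v, fun e => ?_⟩
  rw [entry_lowering_pow, pow_zero, mul_one, pairing_apply,
    Finset.sum_eq_single (r - 1, (e : ℕ) + (Q - r))]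
  · have hv : entry F r s (r - 1) (e + (Q - r)) v = t⁻¹ * w e := by
      rw [entry_fin v (⟨r - 1, by omega⟩, ⟨e + (Q - r), by omega⟩)]
      exact (dif_pos ⟨rfl, Nat.le_add_left _ _⟩).trans (by simp only [Nat.add_sub_cancel])
    rw [hv, mul_right_comm,
      inv_mul_cancel₀ (coeff_one_add_X_pow_sub_one_ne_zero hQ (by omega)), one_mul]
  · rintro ⟨i, j⟩ hij hne
    rw [Finset.HasAntidiagonal.mem_antidiagonal] at hij
    have hi : i ≠ r - 1 := fun hi => hne (Prod.ext hi (by simp only at hij ⊢; omega))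
    by_cases h : i < r ∧ j < s
    · rw [entry_fin v (⟨i, h.1⟩, ⟨j, h.2⟩)]
      simp [v, hi]
    · rw [entry_eq_zero (by simp only; omega), LinearMap.zero_apply, zero_mul]
  · refine fun h => (h (Finset.HasAntidiagonal.mem_antidiagonal.2 ?_)).elim
    simp only
    omega

theorem kdim_sub_one_add_le (hQ : (1 + X : F[X]) ^ Q = 1 + X ^ Q) (hr0 : 0 < r) (hr : r ≤ Q) :
    kdim F r s (Q - 1) + (r + s - Q) ≤ r * s := by
  let φ : LinearMap.range (lowering F r s ^ (Q - 1)) →ₗ[F] Fin (r + s - Q) → F :=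
    LinearMap.pi fun e => entry F r s 0 e ∘ₗ Submodule.subtype _
  have hφ : Function.Surjective φ := fun w =>
    let ⟨v, hv⟩ := exists_entry_lowering_pow_sub_one_eq hQ hr0 hr w
    ⟨⟨_, v, rfl⟩, funext hv⟩
  have hrange := LinearMap.finrank_le_finrank_of_surjective hφ
  have hadd := LinearMap.finrank_range_add_finrank_ker (lowering F r s ^ (Q - 1))
  rw [Module.finrank_fin_fun] at hrange
  rw [Module.finrank_fintype_fun_eq_card, Fintype.card_prod, Fintype.card_fin,
    Fintype.card_fin] at hadd
  rw [kdim]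
  omega

end KernelsOfExtremePowers

section BlockShifts

variable {F : Type*} [Field F] {ι ι' : Type*}

/-- The nilpotent part of a block-diagonal unipotent Jordan matrix: one lowering shift on `κ i`
coordinates for each index `i`. -/
def blockShift (F : Type*) [Field F] (κ : ι → ℕ) : Module.End F ((i : ι) × Fin (κ i) → F) :=
  LinearMap.pi fun x =>
    if h : (x.2 : ℕ) + 1 < κ x.1 then LinearMap.proj ⟨x.1, x.2 + 1, h⟩ else 0

theorem blockShift_apply (κ : ι → ℕ) (v : (i : ι) × Fin (κ i) → F) (i : ι) (a : Fin (κ i)) :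
    blockShift F κ v ⟨i, a⟩ = if h : (a : ℕ) + 1 < κ i then v ⟨i, a + 1, h⟩ else 0 := by
  rw [blockShift, LinearMap.pi_apply]
  split_ifs <;> rfl

theorem blockShift_pow_apply (κ : ι → ℕ) (k : ℕ) (v : (i : ι) × Fin (κ i) → F) (i : ι)
    (a : Fin (κ i)) :
    (blockShift F κ ^ k) v ⟨i, a⟩ = if h : (a : ℕ) + k < κ i then v ⟨i, a + k, h⟩ else 0 := by
  induction k generalizing a with
  | zero => simp
  | succ k ih =>
    rw [pow_succ', Module.End.mul_apply, blockShift_apply]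
    by_cases h : (a : ℕ) + 1 < κ i
    · simp only [dif_pos h, ih, add_assoc, add_comm 1 k]
    · rw [dif_neg h, dif_neg (by omega)]

theorem finrank_ker_blockShift_pow [Fintype ι] (κ : ι → ℕ) (k : ℕ) :
    Module.finrank F (LinearMap.ker (blockShift F κ ^ k)) = ∑ i, min (κ i) k := by
  let e : LinearMap.ker (blockShift F κ ^ k) ≃ₗ[F] ((i : ι) × Fin (min (κ i) k) → F) :=
    { toFun := fun v x => v.1 ⟨x.1, x.2, by omega⟩
      map_add' := fun _ _ => rfl
      map_smul' := fun _ _ => rfl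
      invFun := fun w => ⟨fun x => if h : (x.2 : ℕ) < k then w ⟨x.1, x.2, by omega⟩ else 0, by
        rw [LinearMap.mem_ker]
        ext ⟨i, a⟩
        simp [blockShift_pow_apply]⟩
      left_inv := by
        rintro ⟨v, hv⟩
        ext ⟨i, a⟩
        dsimp only
        split_ifs with h
        · rfl
        · have h0 := congrFun (LinearMap.mem_ker.1 hv) ⟨i, a - k, by omega⟩
          simp only [blockShift_pow_apply, Nat.sub_add_cancel (not_lt.1 h), a.2, dif_pos] at h0
          exact h0.symm
      right_inv := fun w => by
        ext ⟨i, a⟩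
        exact dif_pos (lt_of_lt_of_le a.2 (min_le_right _ _)) }
  rw [e.finrank_eq, Module.finrank_fintype_fun_eq_card, Fintype.card_sigma]
  simp only [Fintype.card_fin]

theorem card_add_sum_min [Fintype ι] (κ : ι → ℕ) {m : ℕ} (hm : 0 < m) :
    Fintype.card {i // κ i = m} + (∑ i, min (κ i) (m - 1) + ∑ i, min (κ i) (m + 1)) =
      2 * ∑ i, min (κ i) m := by
  rw [Fintype.card_subtype, Finset.card_filter, Finset.mul_sum, ← Finset.sum_add_distrib,
    ← Finset.sum_add_distrib]
  refine Finset.sum_congr rfl fun i _ => ?_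
  split_ifs <;> omega

theorem exists_equiv_of_sum_min_eq [Fintype ι] [Fintype ι'] {κ : ι → ℕ} {d : ι' → ℕ}
    (h : ∀ k, ∑ i, min (κ i) k = ∑ j, min (d j) k) :
    ∃ σ : {i // 0 < κ i} ≃ {j // 0 < d j}, ∀ x, d (σ x) = κ x := by
  have hfiber : ∀ m, Nonempty
      ({x : {i // 0 < κ i} // κ x = m} ≃ {y : {j // 0 < d j} // d y = m}) := fun m => by
    rcases m.eq_zero_or_pos with rfl | hm
    · have : IsEmpty {x : {i // 0 < κ i} // κ x = 0} := ⟨fun x => x.1.2.ne' x.2⟩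
      have : IsEmpty {y : {j // 0 < d j} // d y = 0} := ⟨fun y => y.1.2.ne' y.2⟩
      exact ⟨Equiv.equivOfIsEmpty _ _⟩
    · have hcard : Fintype.card {i // κ i = m} = Fintype.card {j // d j = m} := by
        have := card_add_sum_min κ hm
        have := card_add_sum_min d hm
        simp only [h] at *
        omega
      exact ⟨(Equiv.subtypeSubtypeEquivSubtype fun hx => hx ▸ hm).trans
        ((Fintype.equivOfCardEq hcard).trans
          (Equiv.subtypeSubtypeEquivSubtype fun hx => hx ▸ hm).symm)⟩
  exact ⟨Equiv.ofFiberEquiv (f := fun x : {i // 0 < κ i} => κ x)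
    (g := fun y : {j // 0 < d j} => d y) fun m => (hfiber m).some,
    Equiv.ofFiberEquiv_map (g := fun y : {j // 0 < d j} => d y) _⟩

theorem exists_blockShift_conj_of_equiv {κ : ι → ℕ} {d : ι' → ℕ}
    (σ : {i // 0 < κ i} ≃ {j // 0 < d j}) (hσ : ∀ x, d (σ x) = κ x) :
    ∃ e : ((i : ι) × Fin (κ i) → F) ≃ₗ[F] ((j : ι') × Fin (d j) → F),
      ∀ v, e (blockShift F κ v) = blockShift F d (e v) := by
  have hσ' : ∀ y, κ (σ.symm y) = d y := fun y => by rw [← hσ, σ.apply_symm_apply]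
  let τ : (j : ι') × Fin (d j) ≃ (i : ι) × Fin (κ i) :=
    { toFun := fun y => ⟨σ.symm ⟨y.1, y.2.pos⟩, y.2.cast (hσ' _).symm⟩
      invFun := fun x => ⟨σ ⟨x.1, x.2.pos⟩, x.2.cast (hσ _).symm⟩
      left_inv := fun ⟨j, a⟩ => by
        simp [Sigma.ext_iff, Fin.heq_ext_iff]
      right_inv := fun ⟨i, a⟩ => by
        simp [Sigma.ext_iff, Fin.heq_ext_iff] }
  refine ⟨LinearEquiv.funCongrLeft F F τ, fun v => ?_⟩
  ext ⟨j, a⟩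
  change blockShift F κ v ⟨σ.symm ⟨j, a.pos⟩, a.cast (hσ' _).symm⟩ = _
  simp only [blockShift_apply, Fin.val_cast, hσ']
  rfl

end BlockShifts

section JordanForm

variable {F : Type*} [Field F] {V W : Type*} [AddCommGroup V] [Module F V] [AddCommGroup W]
  [Module F W]

/-- Coordinates on `F[X] / (X ^ m)`, namely the coefficients in decreasing order; in these
coordinates multiplication by `X` is the lowering shift. -/
noncomputable def revCoeff (F : Type*) [Field F] (m : ℕ) : F[X] →ₗ[F] (Fin m → F) :=
  LinearMap.pi fun i => lcoeff F i.rev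

theorem revCoeff_apply {m : ℕ} (f : F[X]) (i : Fin m) : revCoeff F m f i = f.coeff i.rev :=
  rfl

theorem ker_revCoeff (m : ℕ) : LinearMap.ker (revCoeff F m) =
    (Submodule.span F[X] {(X : F[X]) ^ m}).restrictScalars F := by
  ext f
  rw [LinearMap.mem_ker, Submodule.restrictScalars_mem, Ideal.submodule_span_eq,
    Ideal.mem_span_singleton, X_pow_dvd_iff]
  constructor
  · intro h d hd
    simpa only [revCoeff_apply, Fin.rev_rev, Pi.zero_apply] using congrFun h (⟨d, hd⟩ : Fin m).rev
  · exact fun h => funext fun i => h _ i.rev.2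

theorem revCoeff_surjective (m : ℕ) : Function.Surjective (revCoeff F m) := by
  intro w
  refine ⟨∑ i : Fin m, monomial i (w i.rev), funext fun i => ?_⟩
  rw [revCoeff_apply, finsetSum_coeff, Finset.sum_eq_single i.rev]
  · rw [coeff_monomial_same, Fin.rev_rev]
  · exact fun b _ hb => coeff_monomial_of_ne _ fun h => hb (Fin.ext h.symm)
  · simp

/-- The isomorphism `F[X] / (X ^ m) ≃ F ^ m` induced by `revCoeff`. -/
noncomputable def quotEquiv (F : Type*) [Field F] (m : ℕ) :
    (F[X] ⧸ Submodule.span F[X] {(X : F[X]) ^ m}) ≃ₗ[F] (Fin m → F) :=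
  (Submodule.Quotient.restrictScalarsEquiv F (Submodule.span F[X] {(X : F[X]) ^ m})).symm ≪≫ₗ
    Submodule.quotEquivOfEq _ _ (ker_revCoeff m).symm ≪≫ₗ
    (revCoeff F m).quotKerEquivOfSurjective (revCoeff_surjective m)

theorem quotEquiv_mk (m : ℕ) (f : F[X]) :
    quotEquiv F m (Submodule.Quotient.mk f) = revCoeff F m f :=
  rfl

theorem quotEquiv_X_smul {m : ℕ} (x : F[X] ⧸ Submodule.span F[X] {(X : F[X]) ^ m}) (a : Fin m) :
    quotEquiv F m ((X : F[X]) • x) a =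
      if h : (a : ℕ) + 1 < m then quotEquiv F m x ⟨a + 1, h⟩ else 0 := by
  obtain ⟨f, rfl⟩ := Submodule.Quotient.mk_surjective _ x
  rw [← Submodule.Quotient.mk_smul, quotEquiv_mk, quotEquiv_mk, revCoeff_apply, smul_eq_mul,
    Fin.val_rev]
  split_ifs with h
  · rw [revCoeff_apply, Fin.val_rev, show m - (a + 1) = m - (a + 1 + 1) + 1 by omega, coeff_X_mul]
  · rw [show m - (a + 1) = 0 by omega, coeff_X_mul_zero]

/-- The structure theorem for finitely generated torsion modules over `F[X]`, applied to `V` with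
`X` acting as `N`, gives the Jordan normal form of `N`. -/
theorem exists_blockShift_conj_of_pow_eq_zero [Module.Finite F V] {N : Module.End F V} {Q : ℕ}
    (hN : N ^ Q = 0) :
    ∃ (l : ℕ) (κ : Fin l → ℕ) (e : V ≃ₗ[F] ((i : Fin l) × Fin (κ i) → F)),
      ∀ v, e (N v) = blockShift F κ (e v) := by
  have htorsion : Module.IsTorsion' (Module.AEval' N) (Submonoid.powers (X : F[X])) := by
    intro x
    obtain ⟨v, rfl⟩ := (Module.AEval'.of N).surjective x
    refine ⟨⟨X ^ Q, Q, rfl⟩, (Module.AEval.X_pow_smul_of N v Q).trans ?_⟩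
    rw [hN, zero_smul, map_zero]
  obtain ⟨l, κ, ⟨e₀⟩⟩ :=
    Module.torsion_by_prime_power_decomposition (irreducible_X (R := F)) htorsion
  let e₁ := e₀ ≪≫ₗ DirectSum.linearEquivFunOnFintype F[X] (Fin l)
    fun i => F[X] ⧸ Submodule.span F[X] {(X : F[X]) ^ κ i}
  let e : V ≃ₗ[F] ((i : Fin l) × Fin (κ i) → F) :=
    Module.AEval'.of N ≪≫ₗ e₁.restrictScalars F ≪≫ₗ
      LinearEquiv.piCongrRight (fun i => quotEquiv F (κ i)) ≪≫ₗ
      (LinearEquiv.piCurry F fun (i : Fin l) (_ : Fin (κ i)) => F).symm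
  have he : ∀ v i a, e v ⟨i, a⟩ = quotEquiv F (κ i) (e₁ (Module.AEval'.of N v) i) a :=
    fun _ _ _ => rfl
  refine ⟨l, κ, e, fun v => ?_⟩
  ext ⟨i, a⟩
  rw [blockShift_apply, he, ← Module.AEval'.X_smul_of, map_smul, Pi.smul_apply, quotEquiv_X_smul]
  rfl

theorem finrank_ker_pow_eq_of_conj {N : Module.End F V} {N' : Module.End F W} (e : V ≃ₗ[F] W)
    (h : ∀ v, e (N v) = N' (e v)) (k : ℕ) :
    Module.finrank F (LinearMap.ker (N ^ k)) = Module.finrank F (LinearMap.ker (N' ^ k)) := by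
  have hk : ∀ v, e ((N ^ k) v) = (N' ^ k) (e v) := fun v => by
    rw [Module.End.pow_apply, Module.End.pow_apply]
    exact Function.Semiconj.iterate_right h k v
  refine (LinearEquiv.ofSubmodules e _ _ ?_).finrank_eq
  ext w
  obtain ⟨v, rfl⟩ := e.surjective w
  simp [← hk]

end JordanForm

section Similarity

variable {F : Type*} [Field F] {r s : ℕ}

theorem jordanBlock_mulVec (w : Fin r → F) (i : Fin r) :
    (jordanBlock F r).mulVec w i = w i + if h : (i : ℕ) + 1 < r then w ⟨i + 1, h⟩ else 0 := by
  have hsplit : ∀ j, jordanBlock F r i j * w j =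
      (if j = i then w j else 0) + if (j : ℕ) = i + 1 then w j else 0 := fun j => by
    by_cases h : (j : ℕ) = i <;> simp [jordanBlock, Fin.ext_iff, h]
  simp only [Matrix.mulVec, dotProduct, hsplit, Finset.sum_add_distrib, Finset.sum_ite_eq',
    Finset.mem_univ, if_true]
  congr 1
  split_ifs with h
  · simp [← Fin.ext_iff (b := ⟨i + 1, h⟩)]
  · exact Finset.sum_eq_zero fun j _ => if_neg (by omega)

theorem isUnit_jordanBlock (r : ℕ) : IsUnit (jordanBlock F r) := by
  have htri : (jordanBlock F r).BlockTriangular id := fun i j hij => by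
    have : (j : ℕ) < i := hij
    exact if_neg (by omega)
  rw [Matrix.isUnit_iff_isUnit_det, Matrix.det_of_isUpperTriangular htri]
  simp [jordanBlock]

theorem jordanBlockDiag_mulVec {ι : Type} [Fintype ι] [DecidableEq ι] (d : ι → ℕ)
    (v : (i : ι) × Fin (d i) → F) : (jordanBlockDiag F d).mulVec v = v + blockShift F d v := by
  ext ⟨i, a⟩
  rw [Pi.add_apply, blockShift_apply, ← jordanBlock_mulVec fun a => v ⟨i, a⟩, Matrix.mulVec,
    dotProduct, Fintype.sum_sigma, Finset.sum_eq_single i]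
  · simp only [jordanBlockDiag, Matrix.blockDiagonal'_apply_eq]
    rfl
  · intro j _ hj
    refine Finset.sum_eq_zero fun b _ => ?_
    rw [jordanBlockDiag, Matrix.blockDiagonal'_apply_ne _ _ _ hj.symm, zero_mul]
  · simp

/-- The column `v (·, j)` of `v`, which is zero for `s ≤ j`. -/
def column (F : Type*) [Field F] (r s j : ℕ) : (Fin r × Fin s → F) →ₗ[F] (Fin r → F) :=
  LinearMap.pi fun i => entry F r s i j

theorem column_fin (v : Fin r × Fin s → F) (i : Fin r) (j : Fin s) :
    column F r s j v i = v (i, j) :=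
  entry_fin v (i, j)

theorem column_eq_zero {j : ℕ} (hj : s ≤ j) : column F r s j = 0 := by
  refine LinearMap.ext fun v => funext fun i => ?_
  rw [column, LinearMap.pi_apply, entry_eq_zero (Or.inr hj)]
  rfl

theorem eq_of_column_eq {v w : Fin r × Fin s → F} (h : ∀ j, column F r s j v = column F r s j w) :
    v = w := by
  ext ⟨i, j⟩
  rw [← column_fin v, h, column_fin]

theorem column_kronecker_mulVec (v : Fin r × Fin s → F) (j : ℕ) :
    column F r s j ((jordanBlock F r ⊗ₖ jordanBlock F s).mulVec v) =
      (jordanBlock F r).mulVec (column F r s j v + column F r s (j + 1) v) := by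
  by_cases hj : j < s
  · ext i
    have hrow : ∀ a, (jordanBlock F s).mulVec (fun b => v (a, b)) ⟨j, hj⟩ =
        (column F r s j v + column F r s (j + 1) v) a := fun a => by
      rw [jordanBlock_mulVec, Pi.add_apply, ← column_fin v]
      split_ifs with h
      · rw [← column_fin v]
      · rw [column_eq_zero (not_lt.1 h)]
        rfl
    rw [column_fin _ i ⟨j, hj⟩]
    simp only [Matrix.mulVec, dotProduct, ← hrow, Matrix.kronecker_apply, Fintype.sum_prod_type,
      Finset.mul_sum, mul_assoc]
  · simp [column_eq_zero, not_lt.1 hj, (not_lt.1 hj).trans j.le_succ]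

theorem column_add_column_lowering (v : Fin r × Fin s → F) (j : ℕ) :
    column F r s j v + column F r s j (lowering F r s v) =
      (jordanBlock F r).mulVec (column F r s j v) + column F r s (j + 1) v := by
  ext i
  have hnext : (if h : (i : ℕ) + 1 < r then column F r s j v ⟨i + 1, h⟩ else 0) =
      entry F r s (i + 1) j v := by
    split_ifs with h
    · rfl
    · rw [entry_eq_zero (Or.inl (not_lt.1 h))]
      rfl
  rw [Pi.add_apply, Pi.add_apply, jordanBlock_mulVec, hnext, add_assoc]
  exact congrArg _ (entry_lowering v i j)

/-- The automorphism applying `T ^ j` to the column `v (·, j)` for every `j`. -/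
def twist (T : (Fin r → F) ≃ₗ[F] (Fin r → F)) (s : ℕ) :
    (Fin r × Fin s → F) ≃ₗ[F] (Fin r × Fin s → F) :=
  let columns := LinearEquiv.funCongrLeft F F (Equiv.prodComm (Fin s) (Fin r)) ≪≫ₗ
    LinearEquiv.curry F F (Fin s) (Fin r)
  columns ≪≫ₗ LinearEquiv.piCongrRight (fun j : Fin s => T ^ (j : ℕ)) ≪≫ₗ columns.symm

theorem column_twist (T : (Fin r → F) ≃ₗ[F] (Fin r → F)) (v : Fin r × Fin s → F) (j : ℕ) :
    column F r s j (twist T s v) = (T ^ j) (column F r s j v) := by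
  by_cases hj : j < s
  · have hv : column F r s j v = fun i => v (i, ⟨j, hj⟩) := funext fun i => column_fin v i ⟨j, hj⟩
    rw [hv]
    exact funext fun i => column_fin _ i ⟨j, hj⟩
  · simp [column_eq_zero (not_lt.1 hj)]

/-- With `T = J_r`, the matrix `J_r ⊗ J_s` is `1 + (T - 1) ⊗ 1 + T ⊗ (J_s - 1)`, and the twist
by `T` absorbs the factor `T` of the last summand. -/
theorem exists_kronecker_conj (F : Type*) [Field F] (r s : ℕ) :
    ∃ e : (Fin r × Fin s → F) ≃ₗ[F] (Fin r × Fin s → F),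
      ∀ v, e ((jordanBlock F r ⊗ₖ jordanBlock F s).mulVec v) = e v + lowering F r s (e v) := by
  have hunit := (Matrix.isUnit_iff_isUnit_det _).1 (isUnit_jordanBlock (F := F) r)
  let T := Matrix.toLin'OfInv (Matrix.nonsing_inv_mul _ hunit) (Matrix.mul_nonsing_inv _ hunit)
  have hT : ∀ w, (jordanBlock F r).mulVec w = T w := fun _ => rfl
  refine ⟨twist T s, fun v => eq_of_column_eq fun j => ?_⟩
  rw [map_add, column_add_column_lowering, column_twist, column_twist, column_twist,
    column_kronecker_mulVec, hT, hT, ← LinearEquiv.mul_apply, ← LinearEquiv.mul_apply, ← pow_succ,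
    ← pow_succ', map_add]

theorem kdim_eq_sum_of_matSimilar {ι : Type} [Fintype ι] [DecidableEq ι] {d : ι → ℕ}
    (h : MatSimilar F (jordanBlock F r ⊗ₖ jordanBlock F s) (jordanBlockDiag F d)) (k : ℕ) :
    kdim F r s k = ∑ i, min (d i) k := by
  obtain ⟨e, he⟩ := h
  obtain ⟨t, ht⟩ := exists_kronecker_conj F r s
  rw [kdim, ← finrank_ker_blockShift_pow (F := F)]
  refine finrank_ker_pow_eq_of_conj (t.symm ≪≫ₗ e) (fun v => ?_) k
  obtain ⟨v, rfl⟩ := t.surjective v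
  have hlow : lowering F r s (t v) = t ((jordanBlock F r ⊗ₖ jordanBlock F s).mulVec v) - t v := by
    rw [ht, add_sub_cancel_left]
  simp only [hlow, LinearEquiv.trans_apply, map_sub, LinearEquiv.symm_apply_apply, he,
    jordanBlockDiag_mulVec, add_sub_cancel_left]

theorem exists_kdim_eq_sum {Q : ℕ} (hQ : lowering F r s ^ Q = 0) :
    ∃ (l : ℕ) (κ : Fin l → ℕ), ∀ k, kdim F r s k = ∑ i, min (κ i) k := by
  obtain ⟨l, κ, e, he⟩ := exists_blockShift_conj_of_pow_eq_zero hQ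
  exact ⟨l, κ, fun k => (finrank_ker_pow_eq_of_conj e he k).trans (finrank_ker_blockShift_pow κ k)⟩

theorem matSimilar_of_kdim_eq_sum {Q : ℕ} (hQ : lowering F r s ^ Q = 0) {ι : Type} [Fintype ι]
    [DecidableEq ι] {d : ι → ℕ} (h : ∀ k, kdim F r s k = ∑ i, min (d i) k) :
    MatSimilar F (jordanBlock F r ⊗ₖ jordanBlock F s) (jordanBlockDiag F d) := by
  obtain ⟨l, κ, e, he⟩ := exists_blockShift_conj_of_pow_eq_zero hQ
  obtain ⟨σ, hσ⟩ := exists_equiv_of_sum_min_eq (κ := κ) (d := d) fun k => by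
    rw [← h, kdim, finrank_ker_pow_eq_of_conj e he, finrank_ker_blockShift_pow]
  obtain ⟨e', he'⟩ := exists_blockShift_conj_of_equiv (F := F) σ hσ
  obtain ⟨t, ht⟩ := exists_kronecker_conj F r s
  refine ⟨t ≪≫ₗ e ≪≫ₗ e', fun v => ?_⟩
  simp only [LinearEquiv.trans_apply, ht, map_add, he, he', jordanBlockDiag_mulVec]

end Similarity

section Concavity

variable {F : Type*} [Field F] {r s Q : ℕ}

theorem min_concave (x k a b : ℕ) :
    b * min x k + a * min x (k + a + b) ≤ (a + b) * min x (k + a) := by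
  rcases le_total x (k + a) with h | h
  · rw [min_eq_left h, min_eq_left (h.trans (Nat.le_add_right _ _)), add_mul, add_comm]
    gcongr
    exact min_le_left _ _
  · rw [min_eq_right h, min_eq_right ((Nat.le_add_right _ _).trans h)]
    calc b * k + a * min x (k + a + b) ≤ b * k + a * (k + a + b) := by
          gcongr
          exact min_le_right _ _
      _ = (a + b) * (k + a) := by ring

theorem kdim_concave (hQ : lowering F r s ^ Q = 0) (k a b : ℕ) :
    b * kdim F r s k + a * kdim F r s (k + a + b) ≤ (a + b) * kdim F r s (k + a) := by
  obtain ⟨l, κ, hκ⟩ := exists_kdim_eq_sum hQ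
  simp only [hκ, Finset.mul_sum, ← Finset.sum_add_distrib]
  exact Finset.sum_le_sum fun i _ => min_concave (κ i) k a b

theorem kdim_zero (r s : ℕ) : kdim F r s 0 = 0 := by
  rw [kdim, pow_zero, Module.End.one_eq_id, LinearMap.ker_id, finrank_bot]

theorem kdim_le_mul (hQ : lowering F r s ^ Q = 0) (k : ℕ) : kdim F r s k ≤ k * r := by
  rcases k with - | k
  · simp [kdim_zero]
  · have hconcave := kdim_concave hQ 0 1 k
    rw [kdim_zero, kdim_one, zero_add, mul_zero, zero_add, one_mul, add_comm 1 k] at hconcave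
    exact hconcave.trans (Nat.mul_le_mul_left _ (min_le_left r s))

theorem kdim_eq_mul_of_le (hQ : lowering F r s ^ Q = 0) {k m : ℕ} (hm : kdim F r s m = m * r)
    (hk : k ≤ m) : kdim F r s k = k * r := by
  refine le_antisymm (kdim_le_mul hQ k) ?_
  rcases m.eq_zero_or_pos with rfl | hm0
  · simp [Nat.le_zero.1 hk]
  · obtain ⟨b, rfl⟩ := Nat.exists_eq_add_of_le hk
    have hconcave := kdim_concave hQ 0 k b
    rw [kdim_zero, mul_zero, zero_add, zero_add, hm] at hconcave
    exact Nat.le_of_mul_le_mul_left (by linarith) hm0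

theorem kdim_add_mul_eq_of_le (hQ : (1 + X : F[X]) ^ Q = 1 + X ^ Q) (hr0 : 0 < r) (hr : r ≤ Q)
    (hs : s ≤ Q) {m k : ℕ} (hm : kdim F r s m + (r + s - Q) * (Q - m) = r * s) (hmk : m ≤ k)
    (hkQ : k ≤ Q) : kdim F r s k + (r + s - Q) * (Q - k) = r * s := by
  have hnil := lowering_pow_eq_zero hQ hr hs
  have htop := kdim_eq_mul hQ hr hs le_rfl
  have hslope := kdim_sub_one_add_le (s := s) hQ hr0 hr
  obtain ⟨a, rfl⟩ := Nat.exists_eq_add_of_le hmk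
  rcases hkQ.eq_or_lt with rfl | hlt
  · simp [htop]
  obtain ⟨b, rfl⟩ := Nat.exists_eq_add_of_lt hlt
  generalize r + s - (m + a + b + 1) = c at hm hslope ⊢
  have hright := kdim_concave hnil (m + a) b 1
  have hleft := kdim_concave hnil m a (b + 1)
  rw [show m + a + b + 1 - 1 = m + a + b by omega] at hslope
  rw [show m + a + b + 1 - m = a + b + 1 by omega] at hm
  rw [show m + a + b + 1 - (m + a) = b + 1 by omega]
  rw [← add_assoc (m + a) b 1] at hleft
  rw [htop] at hright hleft
  refine le_antisymm (by nlinarith) ?_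
  refine le_of_mul_le_mul_left (a := a + (b + 1)) ?_ (by omega)
  nlinarith

end Concavity

section BlockCount

variable {ι : Type*} [Fintype ι] {q r s δ d a k l : ℕ} {ν : ι → ℕ}

/-- The properties of the family `ν` of the block sizes of `J_r ⊗ J_s`, for `r + s ≤ q`, that
determine the number and the total size of the blocks built from them. -/
structure IsBlockFamily (q r s : ℕ) (ν : ι → ℕ) : Prop where
  add_le : r + s ≤ q
  le (x : ι) : ν x ≤ q
  card_eq : Fintype.card ι = min r s
  sum_eq : ∑ x, ν x = r * s

theorem IsBlockFamily.sum_min_eq (hν : IsBlockFamily q r s ν) (hk : q ≤ k) :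
    ∑ x, min (ν x) k = r * s := by
  rw [← hν.sum_eq]
  exact Finset.sum_congr rfl fun x _ => min_eq_left ((hν.le x).trans hk)

/-- The sum of `min β k` over a layer of blocks centred at `a`: the sizes `β` are `a` and `a - q`,
taken `|r - s|` and `q - r - s` times, and `a + ν x` and `a - ν x` for all `x`. -/
def layerSum (q r s : ℕ) (ν : ι → ℕ) (a k : ℕ) : ℕ :=
  Nat.dist r s * min a k + (q - r - s) * min (a - q) k +
    ∑ x, (min (a + ν x) k + min (a - ν x) k)

theorem dist_add_two_mul_min (r s : ℕ) : Nat.dist r s + 2 * min r s = r + s := by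
  rw [Nat.dist]
  omega

theorem IsBlockFamily.layerSum_of_le (hν : IsBlockFamily q r s ν) (hk : k + q ≤ a) :
    layerSum q r s ν a k = q * k := by
  have hmin : ∀ x, min (a + ν x) k + min (a - ν x) k = 2 * k := fun x => by
    have := hν.le x
    omega
  have hE : q - r - s + (r + s) = q := by have := hν.add_le; omega
  simp only [layerSum, hmin, Finset.sum_const, Finset.card_univ, hν.card_eq, smul_eq_mul]
  rw [min_eq_right (by omega), min_eq_right (by omega)]
  linear_combination k * dist_add_two_mul_min r s + k * hE

theorem IsBlockFamily.layerSum_add (hν : IsBlockFamily q r s ν) (ha : q ≤ a) (l : ℕ) :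
    layerSum q r s ν a (a + l) + (r * s + q * (q - r - s)) = q * a + ∑ x, min (ν x) l := by
  have hmin : ∀ x, min (a + ν x) (a + l) + min (a - ν x) (a + l) + ν x = 2 * a + min (ν x) l :=
    fun x => by
      have := hν.le x
      omega
  have hsum := Finset.sum_congr (rfl : Finset.univ = Finset.univ) fun x _ => hmin x
  simp only [Finset.sum_add_distrib (g := ν), Finset.sum_add_distrib (f := fun _ => 2 * a),
    Finset.sum_const, Finset.card_univ, hν.card_eq, smul_eq_mul, hν.sum_eq] at hsum
  have hE : q - r - s + (r + s) = q := by have := hν.add_le; omega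
  rw [layerSum, min_eq_left (by omega), min_eq_left (by omega)]
  obtain ⟨a, rfl⟩ := Nat.exists_eq_add_of_le' ha
  rw [Nat.add_sub_cancel]
  linear_combination hsum + (a + q) * dist_add_two_mul_min r s + (a + q) * hE

theorem IsBlockFamily.layerSum_sub (hν : IsBlockFamily q r s ν) (ha : q ≤ a) (hl : l ≤ q) :
    layerSum q r s ν a (a - l) + r * s + q * (q - r - s) =
      (r + s) * (a - l) + (q - r - s) * a + ∑ x, min (ν x) l := by
  have hmin : ∀ x, min (a + ν x) (a - l) + min (a - ν x) (a - l) + ν x =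
      2 * (a - l) + min (ν x) l := fun x => by
    have := hν.le x
    omega
  have hsum := Finset.sum_congr (rfl : Finset.univ = Finset.univ) fun x _ => hmin x
  simp only [Finset.sum_add_distrib (g := ν), Finset.sum_add_distrib (f := fun _ => 2 * (a - l)),
    Finset.sum_const, Finset.card_univ, hν.card_eq, smul_eq_mul, hν.sum_eq] at hsum
  rw [layerSum, min_eq_right (by omega), min_eq_left (by omega)]
  obtain ⟨b, rfl⟩ := Nat.exists_eq_add_of_le' ha
  rw [Nat.add_sub_cancel]
  linear_combination hsum + (b + q - l) * dist_add_two_mul_min r s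

/-- The sum of `min β k` over the blocks of size `δ q`, taken `max 0 (r - s)` times, the blocks
`δ q + ν x` and the layers centred at `(δ + 2 i) q` for `1 ≤ i ≤ d`. -/
def stackSum (q r s δ d : ℕ) (ν : ι → ℕ) (k : ℕ) : ℕ :=
  (r - s) * min (δ * q) k + ∑ x, min (δ * q + ν x) k +
    ∑ i ∈ Finset.range d, layerSum q r s ν ((δ + 2 * (i + 1)) * q) k

theorem stackSum_succ (q r s δ d : ℕ) (ν : ι → ℕ) (k : ℕ) :
    stackSum q r s δ (d + 1) ν k =
      stackSum q r s δ d ν k + layerSum q r s ν ((δ + 2 * (d + 1)) * q) k := by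
  rw [stackSum, stackSum, Finset.sum_range_succ, ← add_assoc]

theorem IsBlockFamily.stackSum_zero_of_le (hν : IsBlockFamily q r s ν) (hk : k ≤ δ * q) :
    stackSum q r s δ 0 ν k = r * k := by
  have hmin : ∀ x, min (δ * q + ν x) k = k := fun x => min_eq_right (by omega)
  have hmul : (r - s + min r s) * k = r * k := by
    congr 1
    omega
  simp only [stackSum, hmin, min_eq_right hk, Finset.sum_const, Finset.card_univ, hν.card_eq,
    smul_eq_mul, Finset.sum_range_zero, add_zero, ← add_mul, hmul]

theorem IsBlockFamily.stackSum_add (hν : IsBlockFamily q r s ν) (d l : ℕ) :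
    stackSum q r s δ d ν ((δ + 2 * d) * q + l) + d * q * (q - r - s) =
      r * (δ * q) + q * (d * (δ + d + 1) * q) + ∑ x, min (ν x) l := by
  induction d generalizing l with
  | zero =>
    have hmul : (r - s + min r s) * (δ * q) = r * (δ * q) := by
      congr 1
      omega
    simp only [stackSum, mul_zero, add_zero, Nat.add_min_add_left, Finset.sum_add_distrib,
      Finset.sum_const, Finset.card_univ, hν.card_eq, smul_eq_mul, Finset.sum_range_zero, zero_mul,
      min_eq_left (Nat.le_add_right _ l), ← hmul]
    ring
  | succ d ih =>
    have hbelow := ih (2 * q + l)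
    rw [hν.sum_min_eq (by omega), show (δ + 2 * d) * q + (2 * q + l) =
      (δ + 2 * (d + 1)) * q + l by ring] at hbelow
    have hlayer := hν.layerSum_add (a := (δ + 2 * (d + 1)) * q) (by nlinarith) l
    rw [stackSum_succ]
    linear_combination hbelow + hlayer

theorem IsBlockFamily.stackSum_sub (hν : IsBlockFamily q r s ν) (d : ℕ) (hl : l ≤ q) :
    stackSum q r s δ (d + 1) ν ((δ + 2 * (d + 1)) * q - l) + (d + 1) * q * (q - r - s) =
      r * (δ * q) + q * (d * (δ + d + 1) * q) + (r + s) * ((δ + 2 * (d + 1)) * q - l) +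
        (q - r - s) * ((δ + 2 * (d + 1)) * q) + ∑ x, min (ν x) l := by
  have hbelow := hν.stackSum_add (δ := δ) d (2 * q - l)
  rw [hν.sum_min_eq (by omega), ← Nat.add_sub_assoc (by omega), show (δ + 2 * d) * q + 2 * q =
    (δ + 2 * (d + 1)) * q by ring] at hbelow
  have hlayer := hν.layerSum_sub (a := (δ + 2 * (d + 1)) * q) (by nlinarith) hl
  rw [stackSum_succ]
  linear_combination hbelow + hlayer

theorem IsBlockFamily.stackSum_of_le (hν : IsBlockFamily q r s ν) (hk : (δ + 2 * d + 1) * q ≤ k) :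
    stackSum q r s δ d ν k = stackSum q r s δ d ν ((δ + 2 * d + 1) * q) := by
  obtain ⟨l, rfl⟩ := Nat.exists_eq_add_of_le hk
  have h := hν.stackSum_add (δ := δ) d q
  have h' := hν.stackSum_add (δ := δ) d (q + l)
  rw [hν.sum_min_eq (by omega), ← add_one_mul] at h
  rw [hν.sum_min_eq (by omega), ← add_assoc, ← add_one_mul] at h'
  omega

end BlockCount

section ReductionFormula

variable {F : Type*} [Field F] {ι : Type*} [Fintype ι] {q r₀ r₁ s₁ δ d c k l : ℕ} {ν : ι → ℕ}

theorem isBlockFamily_of_kdim_eq_sum (hq : (1 + X : F[X]) ^ q = 1 + X ^ q) (hle : r₁ + s₁ ≤ q)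
    (hpos : ∀ x, 0 < ν x) (hκ : ∀ k, kdim F r₁ s₁ k = ∑ x, min (ν x) k) :
    IsBlockFamily q r₁ s₁ ν := by
  have htop : ∀ k, q ≤ k → ∑ x, min (ν x) k = r₁ * s₁ := fun k hk => by
    rw [← hκ, kdim_eq_mul hq (by omega) (by omega) hk]
  have hν : ∀ x, ν x ≤ q := fun x => by
    have hmono : ∀ y ∈ Finset.univ, min (ν y) q ≤ min (ν y) (q + 1) := fun y _ => by omega
    have := (Finset.sum_eq_sum_iff_of_le hmono).1 ((htop q le_rfl).trans (htop _ q.le_succ).symm) x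
      (Finset.mem_univ x)
    omega
  refine ⟨hle, hν, ?_, ?_⟩
  · rw [← kdim_one (F := F), hκ, Fintype.card_eq_sum_ones]
    exact Finset.sum_congr rfl fun x _ => (min_eq_right (hpos x)).symm
  · rw [← htop q le_rfl]
    exact Finset.sum_congr rfl fun x _ => (min_eq_left (hν x)).symm

theorem kdim_mul_add_eq_stackSum (p : ℕ) [CharP F p] (hq0 : 0 < q)
    (hq : (1 + X : F[X]) ^ q = 1 + X ^ q) (hν : IsBlockFamily q r₁ s₁ ν)
    (hκ : ∀ k, kdim F r₁ s₁ k = ∑ x, min (ν x) k) {i t : ℕ} (hp : i + t + δ + i + 1 ≤ p)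
    (hl : l ≤ q) :
    kdim F ((i + t) * q + r₁) ((i + t + δ) * q + s₁) ((δ + 2 * i) * q + l) =
      stackSum q r₁ s₁ δ i ν ((δ + 2 * i) * q + l) + t * q * ((δ + 2 * i) * q + l) := by
  have hle := hν.add_le
  have hgap := syzGapSq_mul_add (F := F) (a := i + t) (b := δ + 2 * i) (c := i + t + δ)
    (d := i + t + δ + i) p hq (by ring) hp (by omega) (by omega) (by omega) hq0
    (show r₁ ≤ q by omega) hl (show s₁ ≤ q by omega)
  have hstack := hν.stackSum_add (δ := δ) i l
  rw [← hκ] at hstack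
  simp only [syzGapSq] at hgap
  rw [Nat.sub_sub] at hstack
  zify [hle] at hstack hgap ⊢
  linarith

theorem kdim_mul_sub_eq_stackSum (p : ℕ) [CharP F p] (hq0 : 0 < q)
    (hq : (1 + X : F[X]) ^ q = 1 + X ^ q) (hν : IsBlockFamily q r₁ s₁ ν)
    (hκ : ∀ k, kdim F r₁ s₁ k = ∑ x, min (ν x) k) {i t : ℕ}
    (hp : i + 1 + t + δ + (i + 1) + 1 ≤ p) (hl : l ≤ q) :
    kdim F ((i + 1 + t) * q + r₁) ((i + 1 + t + δ) * q + s₁) ((δ + 2 * (i + 1)) * q - l) =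
      stackSum q r₁ s₁ δ (i + 1) ν ((δ + 2 * (i + 1)) * q - l) +
        t * q * ((δ + 2 * (i + 1)) * q - l) := by
  have hle := hν.add_le
  have hgap := syzGapSq_mul_sub (F := F) (a := i + 1 + t) (b := δ + 2 * (i + 1))
    (c := i + 1 + t + δ) (d := i + 1 + t + δ + (i + 1)) p hq (by ring) hp (by omega) (by omega)
    (by omega) hq0 (show r₁ ≤ q by omega) hl (show s₁ ≤ q by omega)
  have hstack := hν.stackSum_sub (δ := δ) i hl
  have hlk : l ≤ (δ + 2 * (i + 1)) * q := by nlinarith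
  rw [← hκ] at hstack
  simp only [syzGapSq] at hgap
  rw [Nat.sub_sub] at hstack
  zify [hle, hlk] at hstack hgap ⊢
  linarith

theorem kdim_eq_stackSum_zero (p : ℕ) [CharP F p] (hq0 : 0 < q)
    (hq : (1 + X : F[X]) ^ q = 1 + X ^ q) (hν : IsBlockFamily q r₁ s₁ ν)
    (hκ : ∀ k, kdim F r₁ s₁ k = ∑ x, min (ν x) k) {Q : ℕ}
    (hnil : lowering F (r₀ * q + r₁) ((r₀ + δ) * q + s₁) ^ Q = 0) (hp : r₀ + δ + 1 ≤ p)
    (hk : k ≤ (δ + 1) * q) :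
    kdim F (r₀ * q + r₁) ((r₀ + δ) * q + s₁) k = stackSum q r₁ s₁ δ 0 ν k + r₀ * q * k := by
  have hadd : ∀ l ≤ q, kdim F (r₀ * q + r₁) ((r₀ + δ) * q + s₁) (δ * q + l) =
      stackSum q r₁ s₁ δ 0 ν (δ * q + l) + r₀ * q * (δ * q + l) := fun l hl => by
    simpa using kdim_mul_add_eq_stackSum (i := 0) (t := r₀) (δ := δ) p hq0 hq hν hκ (by omega) hl
  rcases le_total (δ * q) k with hkδ | hkδ
  · obtain ⟨l, rfl⟩ := Nat.exists_eq_add_of_le hkδ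
    exact hadd l (by rw [add_one_mul] at hk; omega)
  · have hδ := hadd 0 (Nat.zero_le _)
    rw [add_zero, hν.stackSum_zero_of_le le_rfl] at hδ
    rw [hν.stackSum_zero_of_le hkδ, kdim_eq_mul_of_le hnil (hδ.trans (by ring)) hkδ]
    ring

theorem kdim_eq_stackSum (p : ℕ) [CharP F p] (hq0 : 0 < q)
    (hq : (1 + X : F[X]) ^ q = 1 + X ^ q) (hν : IsBlockFamily q r₁ s₁ ν)
    (hκ : ∀ k, kdim F r₁ s₁ k = ∑ x, min (ν x) k) {Q t : ℕ}
    (hnil : lowering F (r₀ * q + r₁) ((r₀ + δ) * q + s₁) ^ Q = 0) (ht : d + t = r₀)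
    (hp : r₀ + δ + d + 1 ≤ p) (hk : k ≤ (δ + 2 * d + 1) * q) :
    kdim F (r₀ * q + r₁) ((r₀ + δ) * q + s₁) k = stackSum q r₁ s₁ δ d ν k + t * q * k := by
  induction d generalizing t with
  | zero =>
    obtain rfl : t = r₀ := by omega
    exact kdim_eq_stackSum_zero p hq0 hq hν hκ hnil hp hk
  | succ d ih =>
    have hmid : (δ + 2 * (d + 1)) * q = (δ + 2 * d + 1) * q + q := by ring
    rcases le_total k ((δ + 2 * d + 1) * q) with hkd | hkd
    · rw [ih (t := t + 1) (by omega) (by omega) hkd, stackSum_succ, hν.layerSum_of_le (by omega)]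
      ring
    subst ht
    rcases le_total k ((δ + 2 * (d + 1)) * q) with hkm | hkm
    · rw [← Nat.sub_sub_self hkm]
      exact kdim_mul_sub_eq_stackSum p hq0 hq hν hκ hp (by omega)
    · obtain ⟨l, rfl⟩ := Nat.exists_eq_add_of_le hkm
      exact kdim_mul_add_eq_stackSum p hq0 hq hν hκ hp (by rw [add_one_mul] at hk; omega)

end ReductionFormula

section TotalCount

variable {F : Type*} [Field F] {ι : Type*} [Fintype ι] {p q r₁ s₁ δ d t e k : ℕ} {ν : ι → ℕ}

theorem kdim_stack_height_add [CharP F p] (hq0 : 0 < q)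
    (hq : (1 + X : F[X]) ^ q = 1 + X ^ q) (hν : IsBlockFamily q r₁ s₁ ν)
    (hκ : ∀ k, kdim F r₁ s₁ k = ∑ x, min (ν x) k) (hp : d + t + δ + d + 1 ≤ p) :
    kdim F ((d + t) * q + r₁) ((d + t + δ) * q + s₁) ((δ + 2 * d + 1) * q) + t * q * (t * q) =
      ((d + t) * q + r₁) * ((d + t + δ) * q + s₁) + t * q * (q - r₁ - s₁) := by
  have hle := hν.add_le
  have hkdim := kdim_mul_add_eq_stackSum (t := t) p hq0 hq hν hκ hp le_rfl
  have hstack := hν.stackSum_add (δ := δ) d q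
  rw [hν.sum_min_eq le_rfl] at hstack
  rw [add_one_mul, hkdim]
  rw [Nat.sub_sub] at hstack ⊢
  zify [hle] at hstack ⊢
  linear_combination hstack

theorem kdim_eq_stackSum_add [CharP F p] (hq0 : 0 < q)
    (hq : (1 + X : F[X]) ^ q = 1 + X ^ q) (hQ : (1 + X : F[X]) ^ (p * q) = 1 + X ^ (p * q))
    (hν : IsBlockFamily q r₁ s₁ ν) (hκ : ∀ k, kdim F r₁ s₁ k = ∑ x, min (ν x) k)
    {r s c : ℕ} (hr : r = (d + t) * q + r₁) (hs : s = (d + t + δ) * q + s₁) (hr0 : 0 < r)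
    (hrp : r ≤ p * q) (hsp : s ≤ p * q) (hp : d + t + δ + d + 1 ≤ p) (hc : c = r + s - p * q)
    (hslope : c + e * (q - r₁ - s₁) = t * q)
    (hheight : c * (p * q - (δ + 2 * d + 1) * q) + t * q * (q - r₁ - s₁) = t * q * (t * q)) :
    kdim F r s k = c * min (p * q) k + stackSum q r₁ s₁ δ d ν k +
      e * (q - r₁ - s₁) * min ((δ + 2 * d + 1) * q) k := by
  have hnil := lowering_pow_eq_zero hQ hrp hsp
  have hKQ : (δ + 2 * d + 1) * q ≤ p * q := Nat.mul_le_mul_right q (by omega)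
  have hbelow : ∀ k ≤ (δ + 2 * d + 1) * q,
      kdim F r s k = stackSum q r₁ s₁ δ d ν k + t * q * k := fun k hk => by
    subst hr hs
    exact kdim_eq_stackSum p hq0 hq hν hκ hnil rfl hp hk
  rcases le_total k ((δ + 2 * d + 1) * q) with hk | hk
  · rw [hbelow k hk, min_eq_right hk, min_eq_right (hk.trans hKQ), ← hslope]
    ring
  have hheight' : kdim F r s ((δ + 2 * d + 1) * q) + c * (p * q - (δ + 2 * d + 1) * q) = r * s := by
    have h := kdim_stack_height_add hq0 hq hν hκ hp
    rw [← hr, ← hs] at h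
    omega
  have habove : kdim F r s k + c * (p * q - k) = r * s := by
    rcases le_total k (p * q) with hkQ | hkQ
    · rw [hc] at hheight' ⊢
      exact kdim_add_mul_eq_of_le hQ hr0 hrp hsp hheight' hk hkQ
    · rw [kdim_eq_mul hQ hrp hsp hkQ, Nat.sub_eq_zero_of_le hkQ, mul_zero, add_zero]
  rw [hν.stackSum_of_le hk, min_eq_left hk]
  rw [hbelow _ le_rfl, ← hslope] at hheight'
  have hmin : min (p * q) k + (p * q - k) = p * q := by omega
  obtain ⟨m, hm⟩ := Nat.exists_eq_add_of_le hKQ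
  rw [hm, Nat.add_sub_cancel_left] at hheight'
  have hc' : c * min (p * q) k + c * (p * q - k) = c * ((δ + 2 * d + 1) * q + m) := by
    rw [← mul_add, hmin, hm]
  linarith

end TotalCount

section BlockSum

theorem stackSum_add_mul_min {ι : Type*} [Fintype ι] {e : ℕ} (he : e ≤ 1) (q r s δ d : ℕ)
    (ν : ι → ℕ) (k : ℕ) :
    stackSum q r s δ d ν k + e * (q - r - s) * min ((δ + 2 * d + 1) * q) k =
      ∑ i ∈ Finset.range d, Nat.dist r s * min ((δ + 2 * (i + 1)) * q) k +
        ((r - s) * min (δ * q) k +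
        (∑ i ∈ Finset.range (d + e), (q - r - s) * min ((δ + 2 * (i + 1) - 1) * q) k +
        ∑ x, (∑ i ∈ Finset.range (d + 1), min ((δ + 2 * i) * q + ν x) k +
          ∑ i ∈ Finset.range d, min ((δ + 2 * (i + 1)) * q - ν x) k))) := by
  have hlast : ∑ i ∈ Finset.range (d + e), (q - r - s) * min ((δ + 2 * (i + 1) - 1) * q) k =
      ∑ i ∈ Finset.range d, (q - r - s) * min ((δ + 2 * (i + 1) - 1) * q) k +
        e * (q - r - s) * min ((δ + 2 * d + 1) * q) k := by
    rcases Nat.le_one_iff_eq_zero_or_eq_one.1 he with rfl | rfl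
    · simp
    · rw [Finset.sum_range_succ, one_mul]
      rfl
  have hpred : ∀ i, (δ + 2 * (i + 1)) * q - q = (δ + 2 * (i + 1) - 1) * q := fun i => by
    rw [Nat.sub_one_mul]
  simp only [hlast, stackSum, layerSum, hpred, Finset.sum_range_succ', Finset.sum_add_distrib,
    Finset.sum_comm (s := Finset.univ), mul_zero, add_zero]
  ring

variable {F : Type*} [Field F] {ι : Type*} [Fintype ι] {p q r₀ s₀ r₁ s₁ : ℕ} {ν : ι → ℕ}

theorem kdim_eq_blockSum [CharP F p] (hq0 : 0 < q)
    (hq : (1 + X : F[X]) ^ q = 1 + X ^ q) (hQ : (1 + X : F[X]) ^ (p * q) = 1 + X ^ (p * q))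
    (hν : IsBlockFamily q r₁ s₁ ν) (hκ : ∀ k, kdim F r₁ s₁ k = ∑ x, min (ν x) k)
    {r s c d₁ d₂ : ℕ} (hr : r = r₀ * q + r₁) (hs : s = s₀ * q + s₁) (hr0 : 0 < r)
    (hrs : r ≤ s) (hsp : s < p * q) (hr1 : 0 < r₁)
    (hcd : if r₀ + s₀ < p then c = 0 ∧ d₁ = r₀ ∧ d₂ = r₀
      else c = r + s - p * q ∧ d₁ = p - s₀ - 1 ∧ d₂ = p - s₀) (k : ℕ) :
    kdim F r s k = c * min (p * q) k +
      (∑ i ∈ Finset.range d₁, Nat.dist r₁ s₁ * min ((s₀ - r₀ + 2 * (i + 1)) * q) k +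
        ((r₁ - s₁) * min ((s₀ - r₀) * q) k +
        (∑ i ∈ Finset.range d₂, (q - r₁ - s₁) * min ((s₀ - r₀ + 2 * (i + 1) - 1) * q) k +
        ∑ x, (∑ i ∈ Finset.range (d₁ + 1), min ((s₀ - r₀ + 2 * i) * q + ν x) k +
          ∑ i ∈ Finset.range d₁, min ((s₀ - r₀ + 2 * (i + 1)) * q - ν x) k)))) := by
  have hle := hν.add_le
  have hs₀p : s₀ < p := by nlinarith
  have hr₀s₀ : r₀ ≤ s₀ := by
    by_contra! hlt
    nlinarith
  obtain ⟨δ, rfl⟩ := Nat.exists_eq_add_of_le hr₀s₀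
  rw [Nat.add_sub_cancel_left]
  split_ifs at hcd with hlt
  · obtain ⟨rfl, rfl, rfl⟩ := hcd
    have hc : 0 = r + s - p * q := by
      have : (d₂ + (d₂ + δ) + 1) * q ≤ p * q := Nat.mul_le_mul_right q hlt
      rw [eq_comm, Nat.sub_eq_zero_iff_le]
      nlinarith
    rw [kdim_eq_stackSum_add (t := 0) (e := 0) (d := d₂) (δ := δ) hq0 hq hQ hν hκ hr hs hr0
      (hrs.trans hsp.le) hsp.le (by omega) hc (by simp) (by simp), add_assoc,
      stackSum_add_mul_min zero_le_one]
    rfl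
  · obtain ⟨hc, rfl, rfl⟩ := hcd
    obtain ⟨d, rfl⟩ := Nat.exists_eq_add_of_lt hs₀p
    obtain ⟨t, rfl⟩ := Nat.exists_eq_add_of_lt (show d < r₀ by omega)
    have hslope : c + 1 * (q - r₁ - s₁) = (t + 1) * q := by
      have hadd : r + s = (d + t + 1 + δ + d + 1) * q + (t * q + r₁ + s₁) := by rw [hr, hs]; ring
      rw [hc, hadd, Nat.add_sub_cancel_left, one_mul, add_one_mul]
      omega
    have hheight : (d + t + 1 + δ + d + 1) * q - (δ + 2 * d + 1) * q = (t + 1) * q := by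
      rw [← Nat.sub_mul]
      congr 1
      omega
    rw [show d + t + 1 + δ + d + 1 - (d + t + 1 + δ) - 1 = d by omega,
      show d + t + 1 + δ + d + 1 - (d + t + 1 + δ) = d + 1 by omega,
      kdim_eq_stackSum_add (t := t + 1) (e := 1) (d := d) (δ := δ) hq0 hq hQ hν hκ hr hs hr0
      (hrs.trans hsp.le) hsp.le (by omega) hc hslope (by rw [hheight, ← hslope]; ring), add_assoc,
      stackSum_add_mul_min le_rfl]

end BlockSum

end JordanTensor

open JordanTensor

/-- Renaud's reduction formula: the decomposition of `J_r ⊗ J_s` for `1 ≤ r ≤ s < p^{n+1}`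
in terms of the decomposition of `J_{r₁} ⊗ J_{s₁}`, where `r = r₀pⁿ + r₁`, `s = s₀pⁿ + s₁`. -/
theorem stmt_9 {F : Type*} [Field F] (p : ℕ) (hp : p.Prime) [CharP F p]
    (n : ℕ) (hn : 0 < n) (r s r0 s0 r1 s1 : ℕ)
    (hr : 1 ≤ r) (hrs : r ≤ s) (hs : s < p ^ (n + 1))
    (hrdec : r = r0 * p ^ n + r1) (hsdec : s = s0 * p ^ n + s1)
    (hr1 : 1 ≤ r1) (hs1 : 1 ≤ s1) (hr1s1 : r1 + s1 ≤ p ^ n)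
    (ℓ : ℕ) (ν : Fin ℓ → ℕ) (nmul : Fin ℓ → ℕ)
    (hν : StrictAnti ν) (hνpos : ∀ j, 0 < ν j) (hnmul : ∀ j, 1 ≤ nmul j)
    (hsim1 : MatSimilar F (jordanBlock F r1 ⊗ₖ jordanBlock F s1)
      (jordanBlockDiag F (fun x : (j : Fin ℓ) × Fin (nmul j) => ν x.1)))
    (c d1 d2 : ℕ)
    (hcd : if r0 + s0 < p then c = 0 ∧ d1 = r0 ∧ d2 = r0
      else c = r + s - p ^ (n + 1) ∧ d1 = p - s0 - 1 ∧ d2 = p - s0) :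
    MatSimilar F (jordanBlock F r ⊗ₖ jordanBlock F s)
      (jordanBlockDiag F
        (Sum.elim (fun _ : Fin c => p ^ (n + 1))
        (Sum.elim (fun x : Fin d1 × Fin (Nat.dist r1 s1) =>
            (s0 - r0 + 2 * ((x.1 : ℕ) + 1)) * p ^ n)
        (Sum.elim (fun _ : Fin (r1 - s1) => (s0 - r0) * p ^ n)
        (Sum.elim (fun x : Fin d2 × Fin (p ^ n - r1 - s1) =>
            (s0 - r0 + 2 * ((x.1 : ℕ) + 1) - 1) * p ^ n)
        (fun x : (j : Fin ℓ) ×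
            (Fin (d1 + 1) × Fin (nmul j) ⊕ Fin d1 × Fin (nmul j)) =>
          Sum.elim
            (fun y : Fin (d1 + 1) × Fin (nmul x.1) =>
              (s0 - r0 + 2 * (y.1 : ℕ)) * p ^ n + ν x.1)
            (fun y : Fin d1 × Fin (nmul x.1) =>
              (s0 - r0 + 2 * ((y.1 : ℕ) + 1)) * p ^ n - ν x.1) x.2)))))) := by
  have := Fact.mk hp
  have hfrob (m : ℕ) : (1 + X : F[X]) ^ p ^ m = 1 + X ^ p ^ m := by
    rw [add_pow_char_pow, one_pow]
  have hq0 : 0 < p ^ n := pow_pos hp.pos n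
  have hQ := hfrob (n + 1)
  rw [pow_succ'] at hQ hs hcd ⊢
  have hκ := kdim_eq_sum_of_matSimilar hsim1
  have hfamily := isBlockFamily_of_kdim_eq_sum (hfrob n) hr1s1 (fun _ => hνpos _) hκ
  have hnil := lowering_pow_eq_zero hQ (hrs.trans hs.le) hs.le
  refine matSimilar_of_kdim_eq_sum hnil fun k => ?_
  rw [kdim_eq_blockSum hq0 (hfrob n) hQ hfamily hκ hrdec hsdec hr hrs hs hr1 hcd k]
  simp only [Fintype.sum_sum_type, Fintype.sum_prod_type, Fintype.sum_sigma, Sum.elim_inl,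
    Sum.elim_inr, Finset.sum_const, Finset.card_univ, Fintype.card_fin, smul_eq_mul,
    Finset.sum_range, Finset.mul_sum, mul_add]
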